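/- If nτ/ζ_τ → ∞ and θ_0 ∈ ℓ0[p_n] with p_n = o(n), then the radius r̂(α,τ) of the horseshoe posterior credible ball satisfies r̂(α,τ) ≥ 0.5 √(n τ ζ_τ) with P_{θ_0}-probability tending to one. -/

import Mathlib

open MeasureTheory ProbabilityTheory Filter Set Real Asymptotics
open scoped ENNReal NNReal BigOperators

noncomputable section

/-- Standard normal density `φ`. -/
def phiN (x : ℝ) : ℝ := (Real.sqrt (2 * Real.pi))⁻¹ * Real.exp (-(x ^ 2) / 2)

/-- Horseshoe prior density with global parameter `τ`. -/
def gHS (τ θ : ℝ) : ℝ :=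
  ∫ l in Set.Ioi (0 : ℝ), phiN (θ / (l * τ)) / (l * τ) * (2 / (Real.pi * (1 + l ^ 2)))

/-- Unnormalised marginal posterior density of `θᵢ` given `Yᵢ = y` (parameter `τ`). -/
def postDens (τ y θ : ℝ) : ℝ := phiN (y - θ) * gHS τ θ

/-- Bayesian marginal density `ψ_τ(y)` of one observation. -/
def margDens (τ y : ℝ) : ℝ := ∫ θ, postDens τ y θ

/-- Marginal posterior probability `Π(θᵢ ∈ A | Yᵢ = y, τ)`. -/
def postProb (τ y : ℝ) (A : Set ℝ) : ℝ := (∫ θ in A, postDens τ y θ) / margDens τ y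

/-- Marginal posterior mean `θ̂ᵢ(τ)`. -/
def postMean (τ y : ℝ) : ℝ := (∫ θ, θ * postDens τ y θ) / margDens τ y

/-- Marginal posterior variance. -/
def postVar (τ y : ℝ) : ℝ :=
  (∫ θ, (θ - postMean τ y) ^ 2 * postDens τ y θ) / margDens τ y

/-- Marginal posterior fourth central moment. -/
def postMom4 (τ y : ℝ) : ℝ :=
  (∫ θ, (θ - postMean τ y) ^ 4 * postDens τ y θ) / margDens τ y

/-- `ζ_τ = √(2 log (1/τ))`. -/
def zet (τ : ℝ) : ℝ := Real.sqrt (2 * Real.log (1 / τ))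

/-- `τ_n(p) = (p/n) √(log (n/p))`. -/
def tauOpt (n p : ℕ) : ℝ := ((p : ℝ) / (n : ℝ)) * Real.sqrt (Real.log ((n : ℝ) / (p : ℝ)))

/-- The law `P_{θ₀}` of `Y^n`. -/
def Pdata {n : ℕ} (θ₀ : Fin n → ℝ) : Measure (Fin n → ℝ) :=
  Measure.pi fun i => gaussianReal (θ₀ i) 1

/-- The standard normal upper `α`-quantile `z_α`. -/
def zquant (α : ℝ) : ℝ := sInf {z : ℝ | ((gaussianReal 0 1) (Set.Ioi z)).toReal ≤ α}

/-- Nearly black vectors `ℓ₀[p]`. -/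
def nearlyBlack (n p : ℕ) : Set (Fin n → ℝ) :=
  {θ | ({i | θ i ≠ 0} : Set (Fin n)).ncard ≤ p}

/-- Unnormalised posterior density of the full vector `θ` given `Y^n = y` and `τ`. -/
def fullDens {n : ℕ} (τ : ℝ) (y θ : Fin n → ℝ) : ℝ := ∏ i, postDens τ (y i) (θ i)

/-- Posterior probability `Π(θ ∈ A | Y^n = y, τ)` of a set of vectors. -/
def fullPostProb {n : ℕ} (τ : ℝ) (y : Fin n → ℝ) (A : Set (Fin n → ℝ)) : ℝ :=
  (∫ θ in A, fullDens τ y θ) / ∫ θ, fullDens τ y θ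

/-- Posterior mean of the full vector (coordinatewise, by conditional independence). -/
def fullPostMean {n : ℕ} (τ : ℝ) (y : Fin n → ℝ) : Fin n → ℝ := fun i => postMean τ (y i)

/-- Euclidean distance on `ℝⁿ`. -/
def l2dist {n : ℕ} (a b : Fin n → ℝ) : ℝ := Real.sqrt (∑ i, (a i - b i) ^ 2)

/-- Marginal likelihood of `τ`. -/
def lik {n : ℕ} (τ : ℝ) (y : Fin n → ℝ) : ℝ := ∏ i, margDens τ (y i)

/-- Unnormalised hierarchical posterior weight of `τ` given the data. -/
def hierWeight {n : ℕ} (pr : ℝ → ℝ) (y : Fin n → ℝ) (τ : ℝ) : ℝ := pr τ * lik τ y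

/-- Hierarchical posterior distribution of `τ`. -/
def hierTauProb {n : ℕ} (pr : ℝ → ℝ) (y : Fin n → ℝ) (A : Set ℝ) : ℝ :=
  (∫ τ in A, hierWeight pr y τ) / ∫ τ, hierWeight pr y τ

/-- Hierarchical marginal posterior probability for coordinate `i`. -/
def hierPostProb {n : ℕ} (pr : ℝ → ℝ) (y : Fin n → ℝ) (i : Fin n) (A : Set ℝ) : ℝ :=
  (∫ τ, hierWeight pr y τ * postProb τ (y i) A) / ∫ τ, hierWeight pr y τ

/-- Hierarchical marginal posterior mean for coordinate `i`. -/
def hierPostMean {n : ℕ} (pr : ℝ → ℝ) (y : Fin n → ℝ) (i : Fin n) : ℝ :=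
  (∫ τ, hierWeight pr y τ * postMean τ (y i)) / ∫ τ, hierWeight pr y τ

/-- Hierarchical posterior probability of a set of vectors. -/
def hierFullPostProb {n : ℕ} (pr : ℝ → ℝ) (y : Fin n → ℝ) (A : Set (Fin n → ℝ)) : ℝ :=
  (∫ τ, pr τ * ∫ θ in A, fullDens τ y θ) / ∫ τ, pr τ * ∫ θ, fullDens τ y θ

/-- Hierarchical posterior mean vector. -/
def hierFullPostMean {n : ℕ} (pr : ℝ → ℝ) (y : Fin n → ℝ) : Fin n → ℝ :=
  fun i => hierPostMean pr y i

/-- The functions `I_k`. -/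
def Ik (τ k y : ℝ) : ℝ :=
  ∫ z in Set.Ioc (0 : ℝ) 1, z ^ k * (τ ^ 2 + (1 - τ ^ 2) * z)⁻¹ * Real.exp (y ^ 2 * z / 2)

/-- The function `m_τ`. -/
def mHS (τ y : ℝ) : ℝ :=
  y ^ 2 * ((Ik τ (1 / 2) y - Ik τ (3 / 2) y) / Ik τ (-(1 / 2)) y) -
    Ik τ (1 / 2) y / Ik τ (-(1 / 2)) y

/-- The excessive-bias restriction with witness `q`. -/
def EBRwith (n : ℕ) (A Cs C : ℝ) (θ : Fin n → ℝ) (q : ℕ) : Prop :=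
  1 ≤ q ∧
    (∑ i, if |θ i| < A * Real.sqrt (2 * Real.log ((n : ℝ) / (q : ℝ))) then (θ i) ^ 2 else 0)
        ≤ C * (q : ℝ) * Real.log ((n : ℝ) / (q : ℝ)) ∧
    (q : ℝ) / Cs ≤
      (({i | A * Real.sqrt (2 * Real.log ((n : ℝ) / (q : ℝ))) ≤ |θ i|} : Set (Fin n)).ncard : ℝ)

/-- The excessive-bias restriction. -/
def EBR (n : ℕ) (A Cs C : ℝ) (θ : Fin n → ℝ) : Prop := ∃ q, EBRwith n A Cs C θ q

/-- The class `Θ[p]`. -/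
def ThetaClass (n p : ℕ) (A Cs C : ℝ) : Set (Fin n → ℝ) :=
  {θ | θ ∈ nearlyBlack n p ∧ EBR n A Cs C θ}

/-- Smallest witness `q` in the excessive-bias restriction. -/
def qmin (n : ℕ) (A Cs C : ℝ) (θ : Fin n → ℝ) : ℕ := sInf {q | EBRwith n A Cs C θ q}

/-- `p̃(θ₀)`: the number of coordinates above threshold for the smallest witness `q`. -/
def ptilde (n : ℕ) (A Cs C : ℝ) (θ : Fin n → ℝ) : ℕ :=
  ({i | A * Real.sqrt (2 * Real.log ((n : ℝ) / (qmin n A Cs C θ : ℝ))) ≤ |θ i|} :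
    Set (Fin n)).ncard

lemma phiN_pos (x : ℝ) : 0 < phiN x := by
  unfold phiN; positivity

lemma phiN_continuous : Continuous phiN := by
  unfold phiN; fun_prop

lemma hs_pw (s y θ : ℝ) (hs : 0 < s) :
    phiN (y - θ) * (phiN (θ / s) / s) =
      phiN y * ((√(1 + s ^ 2))⁻¹ * exp (s ^ 2 / (1 + s ^ 2) * y ^ 2 / 2)) *
        gaussianPDFReal (s ^ 2 / (1 + s ^ 2) * y) (Real.toNNReal (s ^ 2 / (1 + s ^ 2))) θ := by
  have h1 : 0 < 1 + s ^ 2 := by positivity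
  have h2 : 0 < s ^ 2 / (1 + s ^ 2) := by positivity
  rw [gaussianPDFReal, Real.coe_toNNReal _ h2.le]
  unfold phiN
  have e1 : √(2 * π * (s ^ 2 / (1 + s ^ 2))) = √(2 * π) * (s / √(1 + s ^ 2)) := by
    rw [Real.sqrt_mul (by positivity), Real.sqrt_div (by positivity), Real.sqrt_sq hs.le]
  rw [e1]
  have h3 : 0 < √(1 + s ^ 2) := by positivity
  have h4 : 0 < √(2 * π) := by positivity
  have e2 : exp (-(y - θ) ^ 2 / 2) * exp (-(θ / s) ^ 2 / 2) =
      exp (-y ^ 2 / 2) * exp (s ^ 2 / (1 + s ^ 2) * y ^ 2 / 2) *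
        exp (-(θ - s ^ 2 / (1 + s ^ 2) * y) ^ 2 / (2 * (s ^ 2 / (1 + s ^ 2)))) := by
    rw [← Real.exp_add, ← Real.exp_add, ← Real.exp_add]
    congr 1
    field_simp
    ring
  have : ∀ a b c d e A B : ℝ, A ≠ 0 → B ≠ 0 → s ≠ 0 → a * b = c * d * e →
     A⁻¹ * a * (A⁻¹ * b / s) = A⁻¹ * c * (B⁻¹ * d) * ((A * (s / B))⁻¹ * e) := by
    intro a b c d e A B hA hB hs h
    field_simp
    linarith
  exact this _ _ _ _ _ _ _ h4.ne' h3.ne' hs.ne' e2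

/-- weight -/
def wt (τ x : ℝ) : ℝ := 1 / (τ ^ 2 + (1 - τ ^ 2) * x ^ 2)

/-- change of variables -/
lemma hs_cov (τ : ℝ) (hτ : 0 < τ) (h : ℝ → ℝ) :
    ∫ l in Ioi (0:ℝ), (√(1 + (l * τ) ^ 2))⁻¹ * h ((l * τ) ^ 2 / (1 + (l * τ) ^ 2)) *
        (2 / (π * (1 + l ^ 2))) =
      2 * τ / π * ∫ x in (0:ℝ)..1, h (x ^ 2) * wt τ x := by
  have hd : ∀ l ∈ Ioi (0:ℝ), HasDerivWithinAt (fun l : ℝ => l * τ / √(1 + (l * τ) ^ 2))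
      (τ / ((1 + (l * τ) ^ 2) * √(1 + (l * τ) ^ 2))) (Ioi 0) l := by
    intro l hl
    have h1 : 0 < 1 + (l * τ) ^ 2 := by positivity
    have hs : 0 < √(1 + (l * τ) ^ 2) := by positivity
    have a1 : HasDerivAt (fun l : ℝ => l * τ) τ l := by
      simpa using (hasDerivAt_id l).mul_const τ
    have a2 : HasDerivAt (fun l : ℝ => 1 + (l * τ) ^ 2) (2 * (l * τ) * τ) l := by
      have := (a1.pow 2).const_add 1
      simpa using this
    have a3 := a1.div (a2.sqrt h1.ne') hs.ne'
    refine (a3.congr_deriv ?_).hasDerivWithinAt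
    have hsq : √(1 + (l * τ) ^ 2) ^ 2 = 1 + (l * τ) ^ 2 := Real.sq_sqrt h1.le
    set R := √(1 + (l * τ) ^ 2)
    rw [← hsq]
    field_simp
    rw [hsq]; ring
  have hmem : ∀ l ∈ Ioi (0:ℝ), (l * τ / √(1 + (l * τ) ^ 2)) ^ 2 = (l * τ) ^ 2 / (1 + (l * τ) ^ 2) := by
    intro l hl
    rw [div_pow, Real.sq_sqrt (by positivity)]
  have hinj : InjOn (fun l : ℝ => l * τ / √(1 + (l * τ) ^ 2)) (Ioi 0) := by
    intro a ha b hb hab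
    simp only at hab
    have h2 := hmem a ha
    rw [hab, hmem b hb] at h2
    have ha' : 0 < a := ha
    have hb' : 0 < b := hb
    field_simp at h2
    have : b ^ 2 = a ^ 2 := by
      have : (b^2 - a^2) * τ^2 = 0 := by nlinarith
      have ht : τ^2 ≠ 0 := by positivity
      have := (mul_eq_zero.mp this).resolve_right ht
      linarith
    exact ((pow_left_inj₀ hb'.le ha'.le (by norm_num)).mp this).symm
  have himg : (fun l : ℝ => l * τ / √(1 + (l * τ) ^ 2)) '' (Ioi 0) = Ioo 0 1 := by
    ext x
    constructor
    · rintro ⟨l, hl, rfl⟩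
      have hl' : 0 < l := hl
      refine ⟨by positivity, ?_⟩
      have : 0 ≤ l * τ / √(1 + (l * τ) ^ 2) := by positivity
      have h2 := hmem l hl
      simp only
      have h3 : (l * τ / √(1 + (l * τ) ^ 2)) ^ 2 < 1 := by
        rw [h2, div_lt_one (by positivity)]; linarith
      nlinarith
    · rintro ⟨h0, h1⟩
      have hx : 0 < 1 - x ^ 2 := by nlinarith
      have hsx : 0 < √(1 - x ^ 2) := by positivity
      refine ⟨x / (τ * √(1 - x ^ 2)), by simp only [mem_Ioi]; positivity, ?_⟩
      simp only
      have e1 : x / (τ * √(1 - x ^ 2)) * τ = x / √(1 - x ^ 2) := by field_simp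
      have e2 : 1 + (x / √(1 - x ^ 2)) ^ 2 = 1 / (1 - x ^ 2) := by
        rw [div_pow, Real.sq_sqrt hx.le]; field_simp; ring
      rw [e1, e2, Real.sqrt_div (by norm_num), Real.sqrt_one]
      field_simp
  have key := integral_image_eq_integral_abs_deriv_smul measurableSet_Ioi hd hinj
    (fun x => h (x ^ 2) * wt τ x)
  rw [himg] at key
  rw [intervalIntegral.integral_of_le zero_le_one, integral_Ioc_eq_integral_Ioo, key,
    ← integral_const_mul]
  refine setIntegral_congr_fun measurableSet_Ioi ?_
  intro l hl
  have hl' : 0 < l := hl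
  simp only [smul_eq_mul]
  have h1 : 0 < 1 + (l * τ) ^ 2 := by positivity
  have hs : 0 < √(1 + (l * τ) ^ 2) := by positivity
  rw [abs_of_pos (by positivity), hmem l hl]
  have e : wt τ (l * τ / √(1 + (l * τ) ^ 2)) = (1 + (l * τ) ^ 2) / (τ ^ 2 * (1 + l ^ 2)) := by
    unfold wt
    rw [hmem l hl, div_eq_div_iff]
    · field_simp; ring
    · have : τ ^ 2 + (1 - τ ^ 2) * ((l * τ) ^ 2 / (1 + (l * τ) ^ 2)) =
          τ ^ 2 * (1 + l ^ 2) / (1 + (l * τ) ^ 2) := by field_simp; ring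
      rw [this]; positivity
    · positivity
  rw [e]
  field_simp

lemma gauss_integrable_iff (m : ℝ) (v : ℝ≥0) (hv : v ≠ 0) (q : ℝ → ℝ) :
    Integrable q (gaussianReal m v) ↔ Integrable (fun θ => gaussianPDFReal m v θ * q θ) := by
  rw [gaussianReal_of_var_ne_zero _ hv,
    integrable_withDensity_iff_integrable_smul' (measurable_gaussianPDF _ _)
      (ae_of_all _ fun _ => gaussianPDF_lt_top)]
  simp [toReal_gaussianPDF]

lemma inv_one_add_sq_integrable : Integrable (fun l : ℝ => 2 / (π * (1 + l ^ 2))) := by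
  have := integrable_inv_one_add_sq.const_mul (2 / π)
  refine this.congr (ae_of_all _ fun l => ?_)
  have : 0 < 1 + l ^ 2 := by positivity
  simp only
  field_simp

lemma hs_mix (τ y : ℝ) (hτ : 0 < τ) (q : ℝ → ℝ) (hq : Measurable q) (B : ℝ)
    (hqInt : ∀ κ : ℝ, 0 < κ → κ < 1 → Integrable q (gaussianReal (κ * y) κ.toNNReal))
    (hB : ∀ κ : ℝ, 0 < κ → κ < 1 → ∫ θ, |q θ| ∂(gaussianReal (κ * y) κ.toNNReal) ≤ B) :
    Integrable (fun θ => q θ * postDens τ y θ) ∧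
    ∫ θ, q θ * postDens τ y θ = phiN y * (2 * τ / π * ∫ x in (0:ℝ)..1,
      ((∫ θ, q θ ∂(gaussianReal (x ^ 2 * y) (x ^ 2).toNNReal)) * exp (x ^ 2 * y ^ 2 / 2)) *
        wt τ x) := by
  set ν : Measure ℝ := volume.restrict (Ioi (0:ℝ)) with hν
  set f : ℝ → ℝ → ℝ := fun θ l => q θ * phiN (y - θ) *
    (phiN (θ / (l * τ)) / (l * τ) * (2 / (π * (1 + l ^ 2)))) with hf
  set κ : ℝ → ℝ := fun l => (l * τ) ^ 2 / (1 + (l * τ) ^ 2) with hκ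
  set C : ℝ → ℝ := fun l => phiN y * ((√(1 + (l * τ) ^ 2))⁻¹ * exp (κ l * y ^ 2 / 2)) *
    (2 / (π * (1 + l ^ 2))) with hC
  have κpos : ∀ l, 0 < l → 0 < κ l := fun l hl => by simp only [hκ]; positivity
  have κlt : ∀ l, 0 < l → κ l < 1 := fun l hl => by
    simp only [hκ]; rw [div_lt_one (by positivity)]; linarith
  have Cpos : ∀ l, 0 < C l := fun l => by
    have := phiN_pos y
    simp only [hC]; positivity
  have fC : ∀ l, 0 < l → ∀ θ, f θ l = C l *
      (gaussianPDFReal (κ l * y) (κ l).toNNReal θ * q θ) := by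
    intro l hl θ
    have := hs_pw (l * τ) y θ (by positivity)
    simp only [hf, hC, hκ]
    calc _ = q θ * (phiN (y - θ) * (phiN (θ / (l * τ)) / (l * τ))) * (2 / (π * (1 + l ^ 2))) := by ring
      _ = _ := by rw [this]; ring
  have κne : ∀ l, 0 < l → (κ l).toNNReal ≠ 0 := fun l hl => by
    simpa using κpos l hl
  have hmeas : Measurable (Function.uncurry f) := by
    have hp := phiN_continuous.measurable
    simp only [hf, Function.uncurry_def]
    fun_prop
  have hI : Integrable (Function.uncurry f) (volume.prod ν) := by
    rw [integrable_prod_iff' hmeas.aestronglyMeasurable]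
    constructor
    · filter_upwards [ae_restrict_mem measurableSet_Ioi] with l hl
      simp only [Function.uncurry_apply_pair]
      have := ((gauss_integrable_iff _ _ (κne l hl) q).1 (hqInt _ (κpos l hl) (κlt l hl))).const_mul (C l)
      exact this.congr (ae_of_all _ fun θ => (fC l hl θ).symm)
    · have hm2 : AEStronglyMeasurable (fun l => ∫ θ, ‖Function.uncurry f (θ, l)‖) ν := by
        have : StronglyMeasurable (Function.uncurry fun l θ => ‖Function.uncurry f (θ, l)‖) :=
          (hmeas.comp measurable_swap).norm.stronglyMeasurable
        exact this.integral_prod_right.aestronglyMeasurable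
      refine Integrable.mono' (g := fun l => phiN y * exp (y ^ 2 / 2) * B * (2 / (π * (1 + l ^ 2))))
        (inv_one_add_sq_integrable.integrableOn.const_mul _) hm2 ?_
      filter_upwards [ae_restrict_mem measurableSet_Ioi] with l hl
      rw [Real.norm_of_nonneg (integral_nonneg fun _ => norm_nonneg _)]
      have e : ∀ θ, ‖Function.uncurry f (θ, l)‖ = C l *
          (gaussianPDFReal (κ l * y) (κ l).toNNReal θ * |q θ|) := by
        intro θ
        simp only [Function.uncurry_apply_pair]
        rw [fC l hl, norm_mul (C l), norm_mul (gaussianPDFReal _ _ _), Real.norm_of_nonneg (Cpos l).le,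
          Real.norm_of_nonneg (gaussianPDFReal_nonneg _ _ _), Real.norm_eq_abs]
      simp_rw [e]
      rw [integral_const_mul]
      have := integral_gaussianReal_eq_integral_smul (μ := κ l * y) (f := fun θ => |q θ|) (κne l hl)
      simp only [smul_eq_mul] at this
      rw [← this]
      have hb := hB _ (κpos l hl) (κlt l hl)
      have hB0 : 0 ≤ B := le_trans (integral_nonneg fun _ => abs_nonneg _) hb
      calc C l * _ ≤ C l * B := mul_le_mul_of_nonneg_left hb (Cpos l).le
        _ ≤ _ := by
          simp only [hC]
          have h1 : (√(1 + (l * τ) ^ 2))⁻¹ ≤ 1 := by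
            apply inv_le_one_of_one_le₀
            rw [Real.one_le_sqrt]; nlinarith [sq_nonneg (l * τ)]
          have h2 : exp (κ l * y ^ 2 / 2) ≤ exp (y ^ 2 / 2) := by
            apply Real.exp_le_exp.2
            have := (κlt l hl).le
            nlinarith [sq_nonneg y]
          have h3 : (√(1 + (l * τ) ^ 2))⁻¹ * exp (κ l * y ^ 2 / 2) ≤ 1 * exp (y ^ 2 / 2) :=
            mul_le_mul h1 h2 (exp_pos _).le zero_le_one
          have h4 := (phiN_pos y).le
          have h5 : 0 ≤ 2 / (π * (1 + l ^ 2)) := by positivity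
          calc _ = phiN y * (2 / (π * (1 + l ^ 2))) * B * ((√(1 + (l * τ) ^ 2))⁻¹ * exp (κ l * y ^ 2 / 2)) := by ring
            _ ≤ phiN y * (2 / (π * (1 + l ^ 2))) * B * (1 * exp (y ^ 2 / 2)) :=
              mul_le_mul_of_nonneg_left h3 (by positivity)
            _ = _ := by ring
  have hfe : ∀ θ, ∫ l, f θ l ∂ν = q θ * postDens τ y θ := by
    intro θ
    simp only [hf]
    rw [integral_const_mul]
    simp only [postDens, gHS, hν]
    ring
  constructor
  · have := hI.integral_prod_left
    refine this.congr (ae_of_all _ fun θ => ?_)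
    simp only [Function.uncurry_apply_pair]
    exact hfe θ
  · simp_rw [← hfe]
    rw [integral_integral_swap hI]
    rw [← hs_cov τ hτ (fun k => (∫ θ, q θ ∂(gaussianReal (k * y) k.toNNReal)) * exp (k * y ^ 2 / 2)),
      ← integral_const_mul]
    refine setIntegral_congr_fun measurableSet_Ioi ?_
    intro l hl
    simp only
    simp_rw [fC l hl]
    rw [integral_const_mul]
    have := integral_gaussianReal_eq_integral_smul (μ := κ l * y) (f := q) (κne l hl)
    simp only [smul_eq_mul] at this
    rw [← this]
    simp only [hC, hκ]
    ring

lemma wt_den_pos {τ x : ℝ} (hτ : 0 < τ) (h1 : τ < 1) : 0 < τ ^ 2 + (1 - τ ^ 2) * x ^ 2 := by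
  have : 0 < 1 - τ ^ 2 := by nlinarith
  positivity

lemma wt_pos {τ x : ℝ} (hτ : 0 < τ) (h1 : τ < 1) : 0 < wt τ x :=
  one_div_pos.2 (wt_den_pos hτ h1)

lemma wt_continuous {τ : ℝ} (hτ : 0 < τ) (h1 : τ < 1) : Continuous (wt τ) := by
  unfold wt
  exact continuous_const.div (by fun_prop) (fun x => (wt_den_pos hτ h1).ne')

/-- moment integrals -/
def Wk (τ y : ℝ) (k : ℕ) : ℝ := ∫ x in (0:ℝ)..1, x ^ k * (exp (x ^ 2 * y ^ 2 / 2) * wt τ x)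

lemma gauss_memLp (m : ℝ) (v : ℝ≥0) (k : ℕ) : Integrable (fun θ => θ ^ k) (gaussianReal m v) := by
  have h := memLp_id_gaussianReal (μ := m) (v := v) (k : ℝ≥0)
  have := h.integrable_norm_pow'
  refine this.mono' (by fun_prop) (ae_of_all _ fun x => by simp)

lemma gauss_sq (m a : ℝ) (v : ℝ≥0) : ∫ θ, (θ - a) ^ 2 ∂(gaussianReal m v) = v + (m - a) ^ 2 := by
  have h1 := gauss_memLp m v 1
  have h2 := gauss_memLp m v 2
  have hv := variance_id_gaussianReal (μ := m) (v := v)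
  rw [variance_eq_sub (memLp_id_gaussianReal (μ := m) (v := v) 2)] at hv
  simp only [Pi.pow_apply, id_eq, integral_id_gaussianReal] at hv
  simp only [pow_one] at h1
  have : ∀ θ : ℝ, (θ - a) ^ 2 = θ ^ 2 - 2 * a * θ + a ^ 2 := fun θ => by ring
  simp_rw [this]
  have h3 : Integrable (fun θ : ℝ => 2 * a * θ) (gaussianReal m v) := h1.const_mul _
  have h4 : Integrable (fun θ : ℝ => θ ^ 2 - 2 * a * θ) (gaussianReal m v) := h2.sub h3
  rw [integral_add h4 (integrable_const _), integral_sub h2 h3,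
    integral_const_mul, integral_id_gaussianReal]
  simp only [integral_const, probReal_univ, one_smul]
  linarith

/-- fourth absolute moment constant -/
def K4 : ℝ := ∫ z, z ^ 4 ∂(gaussianReal 0 1)

lemma K4_nonneg : 0 ≤ K4 := integral_nonneg fun z => by positivity

lemma gauss_four (m : ℝ) (x : ℝ) :
    ∫ θ, θ ^ 4 ∂(gaussianReal m (x ^ 2).toNNReal) ≤ 8 * m ^ 4 + 8 * K4 * x ^ 4 := by
  have e : gaussianReal m (x ^ 2).toNNReal = (gaussianReal 0 1).map (fun z => m + x * z) := by
    have h1 := gaussianReal_map_const_mul (μ := 0) (v := 1) x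
    have h2 := gaussianReal_map_const_add (μ := x * 0) (v := NNReal.mk (x ^ 2) (sq_nonneg _) * 1) m
    rw [← h1, Measure.map_map (by fun_prop) (by fun_prop)] at h2
    simp only [mul_zero, zero_add, mul_one] at h2
    rw [show (x ^ 2).toNNReal = NNReal.mk (x ^ 2) (sq_nonneg _) from Real.toNNReal_of_nonneg (sq_nonneg _), ← h2]
    rfl
  rw [e, integral_map (by fun_prop) (by fun_prop)]
  have h4 := gauss_memLp 0 1 4
  have hi : Integrable (fun z => 8 * m ^ 4 + 8 * x ^ 4 * z ^ 4) (gaussianReal 0 1) :=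
    (integrable_const _).add (h4.const_mul _)
  have hle : ∀ z : ℝ, (m + x * z) ^ 4 ≤ 8 * m ^ 4 + 8 * x ^ 4 * z ^ 4 := by
    intro z
    have : 8 * x ^ 4 * z ^ 4 = 8 * (x * z) ^ 4 := by ring
    rw [this]
    generalize x * z = b
    nlinarith [sq_nonneg (m - b), sq_nonneg (m ^ 2 - b ^ 2), sq_nonneg (m + b), mul_nonneg (sq_nonneg (m-b)) (sq_nonneg (m+b)), sq_nonneg ((m-b)^2), mul_nonneg (sq_nonneg (m-b)) (sq_nonneg m), mul_nonneg (sq_nonneg (m-b)) (sq_nonneg b)]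
  calc _ ≤ ∫ z, (8 * m ^ 4 + 8 * x ^ 4 * z ^ 4) ∂(gaussianReal 0 1) := by
        refine integral_mono (hi.mono' (by fun_prop) (ae_of_all _ fun z => ?_)) hi hle
        rw [Real.norm_of_nonneg (by positivity)]; exact hle z
    _ = _ := by
      have h5 : ∫ z : ℝ, 8 * x ^ 4 * z ^ 4 ∂(gaussianReal 0 1) = 8 * x ^ 4 * K4 :=
        integral_const_mul _ _
      rw [integral_add (integrable_const _) (h4.const_mul _), h5]
      simp only [integral_const, probReal_univ, one_smul]; ring

lemma Wk_int {τ : ℝ} (hτ : 0 < τ) (h1 : τ < 1) (y : ℝ) (k : ℕ) (a b : ℝ) :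
    IntervalIntegrable (fun x => x ^ k * (exp (x ^ 2 * y ^ 2 / 2) * wt τ x)) volume a b := by
  have := wt_continuous hτ h1
  exact Continuous.intervalIntegrable (by fun_prop) _ _

lemma wt_int {τ : ℝ} (hτ : 0 < τ) (h1 : τ < 1) (a b : ℝ) :
    IntervalIntegrable (wt τ) volume a b :=
  (wt_continuous hτ h1).intervalIntegrable _ _

lemma gauss_four_abs (y κ : ℝ) (h0 : 0 < κ) (h1 : κ < 1) :
    ∫ θ, |θ ^ 4| ∂(gaussianReal (κ * y) κ.toNNReal) ≤ 8 * y ^ 4 + 8 * K4 := by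
  have e : κ = √κ ^ 2 := (Real.sq_sqrt h0.le).symm
  have h := gauss_four (κ * y) √κ
  rw [← e] at h
  have h2 : ∀ θ : ℝ, |θ ^ 4| = θ ^ 4 := fun θ => abs_of_nonneg (by positivity)
  simp_rw [h2]
  refine h.trans ?_
  have h3 : κ ^ 4 ≤ 1 := pow_le_one₀ h0.le h1.le
  have h4 : √κ ^ 4 ≤ 1 := pow_le_one₀ (Real.sqrt_nonneg _) (by rw [Real.sqrt_le_one]; exact h1.le)
  have hK := K4_nonneg
  have : (κ * y) ^ 4 ≤ y ^ 4 := by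
    rw [mul_pow]
    nlinarith [show 0 ≤ y ^ 4 by positivity]
  nlinarith

section post

lemma pd_marg {τ : ℝ} (hτ : 0 < τ) (y : ℝ) : Integrable (postDens τ y) ∧
    margDens τ y = phiN y * (2 * τ / π * Wk τ y 0) := by
  have := hs_mix τ y hτ (fun _ => 1) measurable_const 1 (fun _ _ _ => integrable_const _)
    (fun _ _ _ => by simp)
  simp only [one_mul, integral_const, probReal_univ, smul_eq_mul, mul_one] at this
  refine ⟨this.1, ?_⟩
  rw [margDens, this.2]
  simp [Wk]

lemma pd_four {τ : ℝ} (hτ : 0 < τ) (y : ℝ) : Integrable (fun θ => θ ^ 4 * postDens τ y θ) ∧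
    ∫ θ, θ ^ 4 * postDens τ y θ = phiN y * (2 * τ / π * ∫ x in (0:ℝ)..1,
      ((∫ θ, θ ^ 4 ∂(gaussianReal (x ^ 2 * y) (x ^ 2).toNNReal)) * exp (x ^ 2 * y ^ 2 / 2)) *
        wt τ x) :=
  hs_mix τ y hτ (fun θ => θ ^ 4) (by fun_prop) _ (fun _ _ _ => gauss_memLp _ _ 4)
    (fun κ h0 h1 => gauss_four_abs y κ h0 h1)

lemma pd_quad {τ : ℝ} (hτ : 0 < τ) (h1 : τ < 1) (y : ℝ) (a : ℝ) : Integrable (fun θ => (θ - a) ^ 2 * postDens τ y θ) ∧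
    ∫ θ, (θ - a) ^ 2 * postDens τ y θ = phiN y * (2 * τ / π *
      (Wk τ y 2 + y ^ 2 * Wk τ y 4 - 2 * a * y * Wk τ y 2 + a ^ 2 * Wk τ y 0)) := by
  have hi : ∀ m v, Integrable (fun θ : ℝ => (θ - a) ^ 2) (gaussianReal m v) := by
    intro m v
    have h4 : Integrable (fun θ : ℝ => 2 * θ ^ 2 + 2 * a ^ 2) (gaussianReal m v) :=
      ((gauss_memLp m v 2).const_mul 2).add (integrable_const _)
    refine h4.mono' (by fun_prop) (ae_of_all _ fun θ => ?_)
    rw [Real.norm_of_nonneg (by positivity)]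
    nlinarith [sq_nonneg (θ + a)]
  have := hs_mix τ y hτ (fun θ => (θ - a) ^ 2) (by fun_prop) (1 + 2 * y ^ 2 + 2 * a ^ 2)
    (fun _ _ _ => hi _ _) (fun κ h0 h1 => by
      have h2 : ∀ θ : ℝ, |(θ - a) ^ 2| = (θ - a) ^ 2 := fun θ => abs_of_nonneg (by positivity)
      simp_rw [h2]
      rw [gauss_sq, Real.coe_toNNReal _ h0.le]
      have : (κ * y) ^ 2 ≤ y ^ 2 := by
        rw [mul_pow]; nlinarith [sq_nonneg y, mul_pos h0 (sub_pos.2 h1)]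
      nlinarith [sq_nonneg (κ * y + a)])
  refine ⟨this.1, ?_⟩
  rw [this.2]
  congr 2
  simp_rw [gauss_sq]
  have e : ∀ x : ℝ, (((x ^ 2).toNNReal : ℝ) + (x ^ 2 * y - a) ^ 2) * exp (x ^ 2 * y ^ 2 / 2) * wt τ x =
     ((1 - 2 * a * y) * (x ^ 2 * (exp (x ^ 2 * y ^ 2 / 2) * wt τ x)) +
     y ^ 2 * (x ^ 4 * (exp (x ^ 2 * y ^ 2 / 2) * wt τ x))) +
     a ^ 2 * (x ^ 0 * (exp (x ^ 2 * y ^ 2 / 2) * wt τ x)) := by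
    intro x
    rw [Real.coe_toNNReal _ (sq_nonneg x)]; ring
  simp_rw [e]
  have I := Wk_int hτ h1 y
  rw [intervalIntegral.integral_add (((I 2 0 1).const_mul _).add ((I 4 0 1).const_mul _)) ((I 0 0 1).const_mul _),
    intervalIntegral.integral_add ((I 2 0 1).const_mul _) ((I 4 0 1).const_mul _),
    intervalIntegral.integral_const_mul, intervalIntegral.integral_const_mul,
    intervalIntegral.integral_const_mul]
  unfold Wk
  ring

lemma gHS_nonneg {τ : ℝ} (hτ : 0 < τ) (θ : ℝ) : 0 ≤ gHS τ θ := by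
  unfold gHS
  refine setIntegral_nonneg measurableSet_Ioi fun l hl => ?_
  have hl' : 0 < l := hl
  have := (phiN_pos (θ / (l * τ))).le
  positivity

lemma pd_nonneg {τ : ℝ} (hτ : 0 < τ) (y θ : ℝ) : 0 ≤ postDens τ y θ :=
  mul_nonneg (phiN_pos _).le (gHS_nonneg hτ θ)

lemma pd_one_int {τ : ℝ} (hτ : 0 < τ) (y : ℝ) : Integrable (fun θ => θ * postDens τ y θ) := by
  have hm := (pd_marg hτ y).1
  have h4 := (pd_four hτ y).1
  refine (hm.add h4).mono' ?_ (ae_of_all _ fun θ => ?_)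
  · exact (measurable_id.aestronglyMeasurable).mul hm.aestronglyMeasurable
  · have := pd_nonneg hτ y θ
    rw [norm_mul, Real.norm_of_nonneg this, Real.norm_eq_abs]
    simp only [Pi.add_apply]
    have : |θ| ≤ 1 + θ ^ 4 := by
      rw [abs_le]; constructor <;> nlinarith [sq_nonneg (θ ^ 2 - 1), sq_nonneg (θ - 1), sq_nonneg (θ + 1)]
    nlinarith

lemma pd_four_c {τ : ℝ} (hτ : 0 < τ) (y : ℝ) (a : ℝ) : Integrable (fun θ => (θ - a) ^ 4 * postDens τ y θ) ∧
    ∫ θ, (θ - a) ^ 4 * postDens τ y θ ≤ 8 * (∫ θ, θ ^ 4 * postDens τ y θ) + 8 * a ^ 4 * margDens τ y := by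
  have hm := (pd_marg hτ y).1
  have h4 := (pd_four hτ y).1
  have hi : Integrable (fun θ => 8 * (θ ^ 4 * postDens τ y θ) + 8 * a ^ 4 * postDens τ y θ) :=
    (h4.const_mul 8).add (hm.const_mul (8 * a ^ 4))
  have hle : ∀ θ, (θ - a) ^ 4 * postDens τ y θ ≤ 8 * (θ ^ 4 * postDens τ y θ) + 8 * a ^ 4 * postDens τ y θ := by
    intro θ
    have h0 := pd_nonneg hτ y θ
    have : (θ - a) ^ 4 ≤ 8 * θ ^ 4 + 8 * a ^ 4 := by
      nlinarith [sq_nonneg (θ - a), sq_nonneg (θ ^ 2 - a ^ 2), sq_nonneg (θ + a), mul_nonneg (sq_nonneg (θ-a)) (sq_nonneg (θ+a)), sq_nonneg ((θ+a)^2), mul_nonneg (sq_nonneg (θ+a)) (sq_nonneg θ), mul_nonneg (sq_nonneg (θ+a)) (sq_nonneg a)]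
    nlinarith
  have hI : Integrable (fun θ => (θ - a) ^ 4 * postDens τ y θ) := by
    refine hi.mono' ?_ (ae_of_all _ fun θ => ?_)
    · exact ((by fun_prop : Measurable fun θ : ℝ => (θ - a) ^ 4).aestronglyMeasurable).mul hm.aestronglyMeasurable
    · rw [Real.norm_of_nonneg (mul_nonneg (by positivity) (pd_nonneg hτ y θ))]
      exact hle θ
  refine ⟨hI, (integral_mono hI hi hle).trans ?_⟩
  rw [integral_add (h4.const_mul 8) (hm.const_mul (8 * a ^ 4)), integral_const_mul, integral_const_mul]
  rfl

lemma Wk_zero_pos {τ : ℝ} (hτ : 0 < τ) (h1 : τ < 1) (y : ℝ) : 0 < Wk τ y 0 := by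
  unfold Wk
  refine intervalIntegral.intervalIntegral_pos_of_pos (Wk_int hτ h1 y 0 0 1) (fun x => ?_) zero_lt_one
  have := wt_pos (x := x) hτ h1
  positivity

lemma marg_pos {τ : ℝ} (hτ : 0 < τ) (h1 : τ < 1) (y : ℝ) : 0 < margDens τ y := by
  rw [(pd_marg hτ y).2]
  have := Wk_zero_pos hτ h1 y
  have := phiN_pos y
  positivity

lemma mean_four {τ : ℝ} (hτ : 0 < τ) (h1 : τ < 1) (y : ℝ) : (postMean τ y) ^ 4 * margDens τ y ≤ ∫ θ, θ ^ 4 * postDens τ y θ := by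
  set a := postMean τ y with ha
  have hm := (pd_marg hτ y).1
  have h4 := (pd_four hτ y).1
  have h1i := pd_one_int hτ y
  have e1 : ∫ θ, θ * postDens τ y θ = a * margDens τ y := by
    rw [ha, postMean, div_mul_cancel₀ _ (marg_pos hτ h1 y).ne']
  have hi : Integrable (fun θ => 4 * a ^ 3 * (θ * postDens τ y θ) - 3 * a ^ 4 * postDens τ y θ) :=
    (h1i.const_mul _).sub (hm.const_mul _)
  have := integral_mono hi h4 (fun θ => by
    have h0 := pd_nonneg hτ y θ
    have : 4 * a ^ 3 * θ - 3 * a ^ 4 ≤ θ ^ 4 := by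
      nlinarith [sq_nonneg (θ ^ 2 - a ^ 2), mul_nonneg (sq_nonneg a) (sq_nonneg (θ - a))]
    simp only
    nlinarith)
  rw [integral_sub (h1i.const_mul _) (hm.const_mul _), integral_const_mul, integral_const_mul, e1] at this
  have e2 : ∫ θ, postDens τ y θ = margDens τ y := rfl
  rw [e2] at this
  nlinarith

lemma var_ge {τ : ℝ} (hτ : 0 < τ) (h1 : τ < 1) (y : ℝ) : (Wk τ y 2 + y ^ 2 * Wk τ y 4 - y ^ 2 * Wk τ y 2 ^ 2 / Wk τ y 0) / Wk τ y 0 ≤ postVar τ y := by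
  have hW := Wk_zero_pos hτ h1 y
  have hp := phiN_pos y
  rw [postVar, (pd_quad hτ h1 y _).2, (pd_marg hτ y).2]
  have hc : phiN y * (2 * τ / π) ≠ 0 := by positivity
  rw [← mul_assoc, ← mul_assoc, mul_div_mul_left _ _ hc]
  apply div_le_div_of_nonneg_right _ hW.le
  set a := postMean τ y
  have : 0 ≤ (a * Wk τ y 0 - y * Wk τ y 2) ^ 2 / Wk τ y 0 := by positivity
  have e : (a * Wk τ y 0 - y * Wk τ y 2) ^ 2 / Wk τ y 0 = a ^ 2 * Wk τ y 0 - 2 * a * y * Wk τ y 2 + y ^ 2 * Wk τ y 2 ^ 2 / Wk τ y 0 := by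
    field_simp; ring
  rw [e] at this
  linarith

end post

section W

/-- total weight -/
def Dw (τ : ℝ) : ℝ := ∫ x in (0:ℝ)..1, wt τ x

lemma Dw_eq {τ : ℝ} (hτ : 0 < τ) (h1 : τ < 1) : Dw τ = arccos τ / (τ * √(1 - τ ^ 2)) := by
  have hb : 0 < 1 - τ ^ 2 := by nlinarith
  have hb' : 0 < √(1 - τ ^ 2) := by positivity
  have hsq : √(1 - τ ^ 2) ^ 2 = 1 - τ ^ 2 := Real.sq_sqrt hb.le
  set b := √(1 - τ ^ 2) with hbdef
  have hd : ∀ x ∈ uIcc (0:ℝ) 1, HasDerivAt (fun x => arctan (x * (b / τ)) / (τ * b)) (wt τ x) x := by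
    intro x _
    have a1 : HasDerivAt (fun x : ℝ => x * (b / τ)) (b / τ) x := by
      simpa using (hasDerivAt_id x).mul_const (b / τ)
    refine (a1.arctan.div_const (τ * b)).congr_deriv ?_
    unfold wt
    rw [← hsq]
    have : 0 < τ ^ 2 + b ^ 2 * x ^ 2 := by positivity
    have : 0 < 1 + (x * (b / τ)) ^ 2 := by positivity
    field_simp
  rw [Dw, intervalIntegral.integral_eq_sub_of_hasDerivAt hd (wt_int hτ h1 0 1)]
  rw [Real.arccos_eq_arctan hτ]
  simp [hbdef]

lemma Dw_le_one {τ : ℝ} (hτ : 0 < τ) (h1 : τ < 1) : Dw τ ≤ π / 2 / τ := by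
  rw [Dw_eq hτ h1]
  have hb : 0 < √(1 - τ ^ 2) := Real.sqrt_pos.2 (by nlinarith)
  have h := Real.mul_le_sin (Real.arccos_nonneg τ) (by rw [Real.arccos_le_pi_div_two]; exact hτ.le)
  rw [Real.sin_arccos] at h
  rw [div_le_div_iff₀ (by positivity) hτ]
  have : arccos τ ≤ π / 2 * √(1 - τ ^ 2) := by
    have h2 := mul_le_mul_of_nonneg_left h (by positivity : 0 ≤ π / 2)
    have : π / 2 * (2 / π * arccos τ) = arccos τ := by field_simp
    linarith
  nlinarith

lemma Dw_le_two {τ : ℝ} (hτ : 0 < τ) (h1 : τ < 1) : Dw τ ≤ (π / 2 - τ) / (τ * √(1 - τ ^ 2)) := by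
  rw [Dw_eq hτ h1]
  have hb : 0 < √(1 - τ ^ 2) := Real.sqrt_pos.2 (by nlinarith)
  apply div_le_div_of_nonneg_right _ (by positivity)
  have hpi := Real.pi_gt_three
  have : τ ≤ arcsin τ := by
    rw [Real.le_arcsin_iff_sin_le (by constructor <;> linarith) (by constructor <;> linarith)]
    exact Real.sin_le hτ.le
  rw [Real.arccos]; linarith

lemma Dw_le_three {τ : ℝ} (hτ : 0 < τ) (h1 : τ < 1) : Dw τ ≤ 1 + 2 / 3 * (1 - τ ^ 2) / τ ^ 2 := by
  have hb : 0 < 1 - τ ^ 2 := by nlinarith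
  have : Dw τ ≤ ∫ x in (0:ℝ)..1, (1 + (1 - x ^ 2) * ((1 - τ ^ 2) / τ ^ 2)) := by
    refine intervalIntegral.integral_mono_on zero_le_one (wt_int hτ h1 0 1)
      (Continuous.intervalIntegrable (by fun_prop) _ _) fun x hx => ?_
    have hx2 : x ^ 2 ≤ 1 := by nlinarith [hx.1, hx.2]
    unfold wt
    rw [div_le_iff₀ (wt_den_pos hτ h1)]
    have e : (1 + (1 - x ^ 2) * ((1 - τ ^ 2) / τ ^ 2)) * (τ ^ 2 + (1 - τ ^ 2) * x ^ 2) =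
       1 + (1 - x ^ 2) * x ^ 2 * (1 - τ ^ 2) ^ 2 / τ ^ 2 := by field_simp; ring
    rw [e]
    have : 0 ≤ (1 - x ^ 2) * x ^ 2 * (1 - τ ^ 2) ^ 2 / τ ^ 2 := by
      have : 0 ≤ 1 - x ^ 2 := by linarith
      positivity
    linarith
  refine this.trans (le_of_eq ?_)
  have e : ∫ x in (0:ℝ)..1, (1 + (1 - x ^ 2) * ((1 - τ ^ 2) / τ ^ 2)) = 1 + 2 / 3 * ((1 - τ ^ 2) / τ ^ 2) := by
    rw [intervalIntegral.integral_add (by simp) (Continuous.intervalIntegrable (by fun_prop) _ _),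
      intervalIntegral.integral_mul_const, intervalIntegral.integral_sub (by simp)
        (Continuous.intervalIntegrable (by fun_prop) _ _)]
    have h2 : ∫ x in (0:ℝ)..1, x ^ 2 = 1 / 3 := by rw [integral_pow]; norm_num
    rw [h2]
    simp only [intervalIntegral.integral_const, sub_zero, smul_eq_mul, mul_one]
    norm_num
  rw [e]; ring

lemma x2wt {τ : ℝ} (hτ : 0 < τ) (h1 : τ < 1) : ∫ x in (0:ℝ)..1, x ^ 2 * wt τ x = (1 - τ ^ 2 * Dw τ) / (1 - τ ^ 2) := by
  have hb : 0 < 1 - τ ^ 2 := by nlinarith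
  have e : ∀ x : ℝ, x ^ 2 * wt τ x = (1 - τ ^ 2 * wt τ x) / (1 - τ ^ 2) := by
    intro x
    have := wt_den_pos (x := x) hτ h1
    unfold wt
    field_simp
    ring
  simp_rw [e]
  rw [intervalIntegral.integral_div, intervalIntegral.integral_sub (by simp) ((wt_int hτ h1 0 1).const_mul _),
    intervalIntegral.integral_const_mul]
  simp [Dw]

lemma x2wt_le {τ : ℝ} (hτ : 0 < τ) (h1 : τ < 1) (x : ℝ) (hx : x ^ 2 ≤ 1) : x ^ 2 * wt τ x ≤ 1 := by
  unfold wt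
  rw [mul_one_div, div_le_one (wt_den_pos hτ h1)]
  nlinarith [sq_nonneg τ]

/-- lower bound for posterior variance, moderate τ -/
lemma var_ge_mid {τ : ℝ} (hτ : 0 < τ) (h1 : τ < 1) (y : ℝ) (r : ℝ) (hr : Dw τ * (τ ^ 2 + r * (1 - τ ^ 2)) ≤ 1) : r ≤ postVar τ y := by
  have hb : 0 < 1 - τ ^ 2 := by nlinarith
  have hW := Wk_zero_pos hτ h1 y
  have hw := wt_continuous hτ h1
  have k0 : 0 ≤ ∫ x in (0:ℝ)..1, (x ^ 2 - r) * wt τ x := by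
    have e : ∫ x in (0:ℝ)..1, (x ^ 2 - r) * wt τ x = (1 - τ ^ 2 * Dw τ) / (1 - τ ^ 2) - r * Dw τ := by
      rw [← x2wt hτ h1, Dw, ← intervalIntegral.integral_const_mul, ← intervalIntegral.integral_sub
        (Continuous.intervalIntegrable (by fun_prop) _ _) (Continuous.intervalIntegrable (by fun_prop) _ _)]
      congr 1; ext x; ring
    rw [e, sub_nonneg, le_div_iff₀ hb]
    linarith
  have k1 : r * Wk τ y 0 ≤ Wk τ y 2 := by
    have : exp (r * y ^ 2 / 2) * ∫ x in (0:ℝ)..1, (x ^ 2 - r) * wt τ x ≤ Wk τ y 2 - r * Wk τ y 0 := by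
      unfold Wk
      rw [← intervalIntegral.integral_const_mul, ← intervalIntegral.integral_const_mul,
        ← intervalIntegral.integral_sub
        (Continuous.intervalIntegrable (by fun_prop) _ _) (Continuous.intervalIntegrable (by fun_prop) _ _)]
      refine intervalIntegral.integral_mono_on zero_le_one (Continuous.intervalIntegrable (by fun_prop) _ _)
        (Continuous.intervalIntegrable (by fun_prop) _ _) fun x hx => ?_
      have hwp := (wt_pos (x := x) hτ h1).le
      have : 0 ≤ (x ^ 2 - r) * (exp (x ^ 2 * y ^ 2 / 2) - exp (r * y ^ 2 / 2)) := by
        rcases le_total r (x ^ 2) with h | h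
        · apply mul_nonneg (by linarith)
          rw [sub_nonneg]; apply Real.exp_le_exp.2; nlinarith [sq_nonneg y]
        · apply mul_nonneg_of_nonpos_of_nonpos (by linarith)
          rw [sub_nonpos]; apply Real.exp_le_exp.2; nlinarith [sq_nonneg y]
      have := mul_nonneg this hwp
      linarith
    have := mul_nonneg (exp_pos (r * y ^ 2 / 2)).le k0
    linarith
  -- Cauchy-Schwarz
  have k2 : Wk τ y 2 ^ 2 / Wk τ y 0 ≤ Wk τ y 4 := by
    set c := Wk τ y 2 / Wk τ y 0 with hc
    have : 0 ≤ Wk τ y 4 - 2 * c * Wk τ y 2 + c ^ 2 * Wk τ y 0 := by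
      have I := Wk_int hτ h1 y
      have e : Wk τ y 4 - 2 * c * Wk τ y 2 + c ^ 2 * Wk τ y 0 =
        ∫ x in (0:ℝ)..1, (x ^ 2 - c) ^ 2 * (exp (x ^ 2 * y ^ 2 / 2) * wt τ x) := by
        unfold Wk
        rw [← intervalIntegral.integral_const_mul, ← intervalIntegral.integral_const_mul,
          ← intervalIntegral.integral_sub (I 4 0 1) ((I 2 0 1).const_mul _),
          ← intervalIntegral.integral_add ((I 4 0 1).sub ((I 2 0 1).const_mul _)) ((I 0 0 1).const_mul _)]
        congr 1; ext x; ring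
      rw [e]
      refine intervalIntegral.integral_nonneg zero_le_one fun x hx => ?_
      have hwp := (wt_pos (x := x) hτ h1).le
      positivity
    have e2 : Wk τ y 4 - 2 * c * Wk τ y 2 + c ^ 2 * Wk τ y 0 = Wk τ y 4 - Wk τ y 2 ^ 2 / Wk τ y 0 := by
      rw [hc]; field_simp; ring
    linarith
  refine le_trans ?_ (var_ge hτ h1 y)
  rw [le_div_iff₀ hW]
  have : y ^ 2 * Wk τ y 2 ^ 2 / Wk τ y 0 ≤ y ^ 2 * Wk τ y 4 := by
    rw [mul_div_assoc]; exact mul_le_mul_of_nonneg_left k2 (sq_nonneg y)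
  linarith

end W

lemma intE (y : ℝ) : ∫ x in (0:ℝ)..1, (1 + y ^ 2 * x ^ 2) * exp (x ^ 2 * y ^ 2 / 2) = exp (y ^ 2 / 2) := by
  have h : ∀ x ∈ uIcc (0:ℝ) 1, HasDerivAt (fun x : ℝ => x * exp (x ^ 2 * y ^ 2 / 2))
      ((1 + y ^ 2 * x ^ 2) * exp (x ^ 2 * y ^ 2 / 2)) x := by
    intro x _
    have h1 : HasDerivAt (fun x : ℝ => x ^ 2 * y ^ 2 / 2) (x * y ^ 2) x := by
      have := ((hasDerivAt_pow 2 x).mul_const (y ^ 2)).div_const 2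
      refine this.congr_deriv ?_
      simp; ring
    refine ((hasDerivAt_id x).mul h1.exp).congr_deriv ?_
    simp; ring
  rw [intervalIntegral.integral_eq_sub_of_hasDerivAt h (Continuous.intervalIntegrable (by fun_prop) _ _)]
  simp

lemma intE2 (y : ℝ) : ∫ x in (0:ℝ)..1, (y ^ 2 * x) * exp (x ^ 2 * y ^ 2 / 2) = exp (y ^ 2 / 2) - 1 := by
  have h : ∀ x ∈ uIcc (0:ℝ) 1, HasDerivAt (fun x : ℝ => exp (x ^ 2 * y ^ 2 / 2))
      ((y ^ 2 * x) * exp (x ^ 2 * y ^ 2 / 2)) x := by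
    intro x _
    have h1 : HasDerivAt (fun x : ℝ => x ^ 2 * y ^ 2 / 2) (x * y ^ 2) x := by
      have := ((hasDerivAt_pow 2 x).mul_const (y ^ 2)).div_const 2
      refine this.congr_deriv ?_
      simp; ring
    refine h1.exp.congr_deriv ?_
    ring
  rw [intervalIntegral.integral_eq_sub_of_hasDerivAt h (Continuous.intervalIntegrable (by fun_prop) _ _)]
  simp

lemma exp_chord (y x : ℝ) (hx : x ^ 2 ≤ 1) :
    exp (x ^ 2 * y ^ 2 / 2) ≤ (1 - x ^ 2) + x ^ 2 * exp (y ^ 2 / 2) := by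
  have := convexOn_exp.2 (mem_univ 0) (mem_univ (y ^ 2 / 2)) (show 0 ≤ 1 - x ^ 2 by linarith)
    (sq_nonneg x) (by ring)
  simp only [smul_eq_mul, mul_zero, zero_add, exp_zero, mul_one] at this
  rw [show x ^ 2 * y ^ 2 / 2 = x ^ 2 * (y ^ 2 / 2) by ring]
  exact this

lemma int_chord (E : ℝ) : ∫ x in (0:ℝ)..1, ((1 - x ^ 2) + x ^ 2 * E) = (2 + E) / 3 := by
  have h2 : ∫ x in (0:ℝ)..1, x ^ 2 = 1 / 3 := by rw [integral_pow]; norm_num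
  rw [intervalIntegral.integral_add (Continuous.intervalIntegrable (by fun_prop) _ _)
    (Continuous.intervalIntegrable (by fun_prop) _ _), intervalIntegral.integral_sub (by simp)
    (Continuous.intervalIntegrable (by fun_prop) _ _), intervalIntegral.integral_mul_const, h2]
  simp only [intervalIntegral.integral_const, sub_zero, smul_eq_mul, mul_one]
  ring

lemma trap (u : ℝ) (hu : 0 ≤ u) : exp u - 1 ≤ u * (1 + exp u) / 2 := by
  have hd : ∀ x : ℝ, HasDerivAt (fun u : ℝ => u * (1 + exp u) / 2 - exp u)
      ((1 - exp x + x * exp x) / 2) x := by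
    intro x
    have := (((hasDerivAt_id x).mul ((Real.hasDerivAt_exp x).const_add 1)).div_const 2).sub
      (Real.hasDerivAt_exp x)
    refine this.congr_deriv ?_
    simp; ring
  have hm : MonotoneOn (fun u : ℝ => u * (1 + exp u) / 2 - exp u) (Ici 0) := by
    apply monotoneOn_of_deriv_nonneg (convex_Ici 0)
    · exact Continuous.continuousOn (by fun_prop)
    · exact fun x _ => (hd x).differentiableAt.differentiableWithinAt
    · intro x _
      rw [(hd x).deriv]
      have h1 := Real.add_one_le_exp (-x)
      have h2 : exp x * exp (-x) = 1 := by rw [← Real.exp_add]; simp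
      nlinarith [exp_pos x]
  have := hm (mem_Ici.2 le_rfl) (mem_Ici.2 hu) hu
  simp at this
  linarith

section post

lemma b1 {τ : ℝ} (hτ : 0 < τ) (h1 : τ < 1) (y : ℝ) : exp (y ^ 2 / 2) * (1 - π / 2 * τ) ≤ Wk τ y 2 + y ^ 2 * Wk τ y 4 := by
  have hw := wt_continuous hτ h1
  have I := Wk_int hτ h1 y
  have e1 : Wk τ y 2 + y ^ 2 * Wk τ y 4 = ∫ x in (0:ℝ)..1, ((1 + y ^ 2 * x ^ 2) * exp (x ^ 2 * y ^ 2 / 2)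
      - τ ^ 2 * ((1 - x ^ 2) * (1 + y ^ 2 * x ^ 2) * exp (x ^ 2 * y ^ 2 / 2) * wt τ x)) := by
    unfold Wk
    rw [← intervalIntegral.integral_const_mul, ← intervalIntegral.integral_add (I 2 0 1) ((I 4 0 1).const_mul _)]
    congr 1; ext x
    have hk : x ^ 2 * wt τ x = 1 - τ ^ 2 * (1 - x ^ 2) * wt τ x := by
      have := wt_den_pos (x := x) hτ h1
      unfold wt
      rw [mul_one_div, mul_one_div, div_eq_iff this.ne', sub_mul, div_mul_cancel₀ _ this.ne']
      ring
    linear_combination (1 + y ^ 2 * x ^ 2) * exp (x ^ 2 * y ^ 2 / 2) * hk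
  rw [e1, intervalIntegral.integral_sub (Continuous.intervalIntegrable (by fun_prop) _ _)
    (Continuous.intervalIntegrable (by fun_prop) _ _), intE, intervalIntegral.integral_const_mul]
  have h2 : ∫ x in (0:ℝ)..1, ((1 - x ^ 2) * (1 + y ^ 2 * x ^ 2) * exp (x ^ 2 * y ^ 2 / 2) * wt τ x) ≤
      exp (y ^ 2 / 2) * Dw τ := by
    rw [Dw, ← intervalIntegral.integral_const_mul]
    refine intervalIntegral.integral_mono_on zero_le_one (Continuous.intervalIntegrable (by fun_prop) _ _)
      (Continuous.intervalIntegrable (by fun_prop) _ _) fun x hx => ?_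
    refine mul_le_mul_of_nonneg_right ?_ (wt_pos hτ h1).le
    have hx2 : x ^ 2 ≤ 1 := by nlinarith [hx.1, hx.2]
    have e : exp (y ^ 2 / 2) = exp ((1 - x ^ 2) * (y ^ 2 / 2)) * exp (x ^ 2 * y ^ 2 / 2) := by
      rw [← Real.exp_add]; congr 1; ring
    rw [e]
    refine mul_le_mul_of_nonneg_right ?_ (exp_pos _).le
    set v := 1 - x ^ 2 with hv
    have hv0 : 0 ≤ v := by linarith
    have hv1 : v ≤ 1 := by linarith [sq_nonneg x]
    set u := v * (y ^ 2 / 2) with hu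
    have hu0 : 0 ≤ u := by positivity
    have := Real.quadratic_le_exp_of_nonneg hu0
    have e3 : v * (1 + y ^ 2 * x ^ 2) = v + 2 * u * (1 - v) := by rw [hu, hv]; ring
    rw [e3]
    have k1 : 0 ≤ (1 - v) * (1 - u + u ^ 2 / 2) := mul_nonneg (by linarith) (by nlinarith [sq_nonneg (u - 1)])
    have k2 : 0 ≤ v * (u + u ^ 2 / 2) := by positivity
    nlinarith
  have h3 := Dw_le_one hτ h1
  have h4 : τ ^ 2 * Dw τ ≤ π / 2 * τ := by
    calc τ ^ 2 * Dw τ ≤ τ ^ 2 * (π / 2 / τ) := by gcongr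
      _ = _ := by field_simp
  have hE := exp_pos (y ^ 2 / 2)
  nlinarith [mul_le_mul_of_nonneg_left h2 (sq_nonneg τ), mul_le_mul_of_nonneg_left h4 hE.le]

lemma b2 {τ : ℝ} (hτ : 0 < τ) (h1 : τ < 1) (y : ℝ) : Wk τ y 2 ≤ (2 + exp (y ^ 2 / 2)) / 3 := by
  have hw := wt_continuous hτ h1
  rw [← int_chord, Wk]
  refine intervalIntegral.integral_mono_on zero_le_one (Continuous.intervalIntegrable (by fun_prop) _ _)
      (Continuous.intervalIntegrable (by fun_prop) _ _) fun x hx => ?_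
  have hx2 : x ^ 2 ≤ 1 := by nlinarith [hx.1, hx.2]
  have k1 := x2wt_le hτ h1 x hx2
  have k2 := exp_chord y x hx2
  have := exp_pos (x ^ 2 * y ^ 2 / 2)
  nlinarith

lemma b3 {τ : ℝ} (hτ : 0 < τ) (h1 : τ < 1) (y : ℝ) : Wk τ y 0 ≤ π / 2 / τ + y ^ 2 * (5 + exp (y ^ 2 / 2)) / 12 := by
  have hw := wt_continuous hτ h1
  have h2 : Wk τ y 0 ≤ ∫ x in (0:ℝ)..1, (wt τ x + y ^ 2 / 4 * (1 + ((1 - x ^ 2) + x ^ 2 * exp (y ^ 2 / 2)))) := by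
    rw [Wk]
    refine intervalIntegral.integral_mono_on zero_le_one (Continuous.intervalIntegrable (by fun_prop) _ _)
      (Continuous.intervalIntegrable (by fun_prop) _ _) fun x hx => ?_
    have hx2 : x ^ 2 ≤ 1 := by nlinarith [hx.1, hx.2]
    have k1 := x2wt_le hτ h1 x hx2
    have k2 := exp_chord y x hx2
    have k3 := trap (x ^ 2 * y ^ 2 / 2) (by positivity)
    have k4 := wt_pos (x := x) hτ h1
    have k5 := exp_pos (x ^ 2 * y ^ 2 / 2)
    calc x ^ 0 * (exp (x ^ 2 * y ^ 2 / 2) * wt τ x) = wt τ x + (exp (x ^ 2 * y ^ 2 / 2) - 1) * wt τ x := by ring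
      _ ≤ wt τ x + (x ^ 2 * y ^ 2 / 2 * (1 + exp (x ^ 2 * y ^ 2 / 2)) / 2) * wt τ x := by gcongr
      _ = wt τ x + y ^ 2 / 4 * (1 + exp (x ^ 2 * y ^ 2 / 2)) * (x ^ 2 * wt τ x) := by ring
      _ ≤ wt τ x + y ^ 2 / 4 * (1 + exp (x ^ 2 * y ^ 2 / 2)) * 1 := by gcongr
      _ ≤ _ := by rw [mul_one]; gcongr
  refine h2.trans ?_
  rw [intervalIntegral.integral_add (wt_int hτ h1 0 1) (Continuous.intervalIntegrable (by fun_prop) _ _),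
    intervalIntegral.integral_const_mul, intervalIntegral.integral_add (by simp)
      (Continuous.intervalIntegrable (by fun_prop) _ _), int_chord]
  have := Dw_le_one hτ h1
  unfold Dw at this
  simp only [intervalIntegral.integral_const, sub_zero, smul_eq_mul, mul_one]
  linarith

lemma b4 {τ : ℝ} (hτ : 0 < τ) (h1 : τ < 1) (y : ℝ) : (π / 2 - τ) / τ ≤ Wk τ y 0 := by
  have hw := wt_continuous hτ h1
  have hd : ∀ x ∈ uIcc (0:ℝ) 1, HasDerivAt (fun x : ℝ => arctan (x / τ) / τ) (1 / (τ ^ 2 + x ^ 2)) x := by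
    intro x _
    have := (((hasDerivAt_id x).div_const τ).arctan).div_const τ
    refine this.congr_deriv ?_
    simp only [id]
    have : τ ^ 2 + x ^ 2 ≠ 0 := by positivity
    field_simp
  have hc : Continuous fun x : ℝ => 1 / (τ ^ 2 + x ^ 2) :=
    continuous_const.div (by fun_prop) fun x => by positivity
  have e := intervalIntegral.integral_eq_sub_of_hasDerivAt hd (hc.intervalIntegrable _ _)
  have h2 : ∫ x in (0:ℝ)..1, 1 / (τ ^ 2 + x ^ 2) ≤ Wk τ y 0 := by
    rw [Wk]
    refine intervalIntegral.integral_mono_on zero_le_one (hc.intervalIntegrable _ _)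
      (Continuous.intervalIntegrable (by fun_prop) _ _) fun x hx => ?_
    have k : 1 / (τ ^ 2 + x ^ 2) ≤ wt τ x := by
      unfold wt
      apply one_div_le_one_div_of_le (wt_den_pos hτ h1)
      nlinarith [sq_nonneg (τ * x)]
    have k2 : 1 ≤ exp (x ^ 2 * y ^ 2 / 2) := Real.one_le_exp (by positivity)
    have k4 := wt_pos (x := x) hτ h1
    nlinarith
  refine le_trans ?_ h2
  rw [e]
  simp only [zero_div, arctan_zero, sub_zero]
  gcongr
  rw [one_div, Real.arctan_inv_of_pos hτ]
  have : arctan τ ≤ τ := by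
    have h := Real.le_tan (Real.arctan_nonneg.2 hτ.le) (Real.arctan_lt_pi_div_two τ)
    rwa [Real.tan_arctan] at h
  linarith

lemma b4' {τ : ℝ} (hτ : 0 < τ) (h1 : τ < 1) (y : ℝ) : 1 / (2 * τ) ≤ Wk τ y 0 := by
  refine le_trans ?_ (b4 hτ h1 y)
  rw [div_le_div_iff₀ (by positivity) hτ]
  have := Real.pi_gt_three
  nlinarith

lemma b6 {τ : ℝ} (hτ : 0 < τ) (h1 : τ < 1) (y : ℝ) : ∫ θ, θ ^ 4 * postDens τ y θ ≤ phiN y * (2 * τ / π * ((8 * y ^ 2 + 8 * K4) * exp (y ^ 2 / 2))) := by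
  rw [(pd_four hτ y).2]
  have hK := K4_nonneg
  have hp := phiN_pos y
  have hpi := Real.pi_pos
  gcongr
  have hg : ∫ x in (0:ℝ)..1, (8 * y ^ 2 * ((y ^ 2 * x) * exp (x ^ 2 * y ^ 2 / 2)) + 8 * K4 * exp (y ^ 2 / 2))
      ≤ (8 * y ^ 2 + 8 * K4) * exp (y ^ 2 / 2) := by
    rw [intervalIntegral.integral_add (Continuous.intervalIntegrable (by fun_prop) _ _) (by simp),
      intervalIntegral.integral_const_mul, intE2]
    simp only [intervalIntegral.integral_const, sub_zero, smul_eq_mul]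
    nlinarith [sq_nonneg y]
  refine le_trans ?_ hg
  rw [intervalIntegral.integral_of_le zero_le_one, intervalIntegral.integral_of_le zero_le_one]
  refine integral_mono_of_nonneg (ae_of_all _ fun x => ?_) ?_ ?_
  · have := (wt_pos (x := x) hτ h1).le
    have h4 : 0 ≤ ∫ θ, θ ^ 4 ∂(gaussianReal (x ^ 2 * y) (x ^ 2).toNNReal) :=
      integral_nonneg fun z => by positivity
    simp only [Pi.zero_apply]
    positivity
  · exact (Continuous.intervalIntegrable (by fun_prop) 0 1).1
  · refine (ae_restrict_mem measurableSet_Ioc).mono fun x hx => ?_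
    have hx2 : x ^ 2 ≤ 1 := by nlinarith [hx.1, hx.2]
    have k1 := x2wt_le hτ h1 x hx2
    have hwp := (wt_pos (x := x) hτ h1).le
    have k2 := gauss_four (x ^ 2 * y) x
    have kE := exp_pos (x ^ 2 * y ^ 2 / 2)
    have kE2 : exp (x ^ 2 * y ^ 2 / 2) ≤ exp (y ^ 2 / 2) := by
      apply Real.exp_le_exp.2; nlinarith [sq_nonneg y]
    have x0 := hx.1.le
    have k6 : x ^ 6 ≤ x := by
      calc x ^ 6 ≤ x ^ 1 := pow_le_pow_of_le_one x0 hx.2 (by norm_num)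
        _ = x := pow_one x
    beta_reduce
    calc (∫ θ, θ ^ 4 ∂(gaussianReal (x ^ 2 * y) (x ^ 2).toNNReal)) * exp (x ^ 2 * y ^ 2 / 2) * wt τ x
          ≤ ((8 * (x ^ 2 * y) ^ 4 + 8 * K4 * x ^ 4) * exp (x ^ 2 * y ^ 2 / 2)) * wt τ x := by gcongr
      _ = (8 * y ^ 4 * x ^ 6 * (x ^ 2 * wt τ x)) * exp (x ^ 2 * y ^ 2 / 2)
          + 8 * K4 * (x ^ 2 * (x ^ 2 * wt τ x)) * exp (x ^ 2 * y ^ 2 / 2) := by ring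
      _ ≤ (8 * y ^ 4 * x * 1) * exp (x ^ 2 * y ^ 2 / 2)
          + 8 * K4 * (1 * 1) * exp (y ^ 2 / 2) := by gcongr
      _ = _ := by ring

lemma mom4_le {τ : ℝ} (hτ : 0 < τ) (h1 : τ < 1) (y : ℝ) : postMom4 τ y ≤ 32 * τ * ((8 * y ^ 2 + 8 * K4) * exp (y ^ 2 / 2)) := by
  have hM := marg_pos hτ h1 y
  rw [postMom4, div_le_iff₀ hM]
  have a := (pd_four_c hτ y (postMean τ y)).2
  have b := mean_four hτ h1 y
  have c := b6 hτ h1 y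
  have d := b4' hτ h1 y
  have e := (pd_marg hτ y).2
  have hK := K4_nonneg
  have hp := phiN_pos y
  have hpi := Real.pi_pos
  have f : ∫ θ, θ ^ 4 * postDens τ y θ ≤ 2 * τ * ((8 * y ^ 2 + 8 * K4) * exp (y ^ 2 / 2)) * margDens τ y := by
    refine c.trans ?_
    rw [e]
    calc _ = 2 * τ * ((8 * y ^ 2 + 8 * K4) * exp (y ^ 2 / 2)) * (phiN y * (2 * τ / π * (1 / (2 * τ)))) := by
          field_simp
      _ ≤ _ := by gcongr
  linarith
end post

lemma phiN_eq_pdf : gaussianPDFReal 0 1 = phiN := by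
  ext x; simp [gaussianPDFReal, phiN]

lemma gauss_ind (T : ℝ) (hT : 0 ≤ T) (v : ℝ → ℝ) :
    ∫ y, (Icc (-T) T).indicator v y ∂(gaussianReal 0 1) = ∫ y in (-T)..T, phiN y * v y := by
  rw [integral_gaussianReal_eq_integral_smul one_ne_zero, phiN_eq_pdf,
    intervalIntegral.integral_of_le (by linarith), ← integral_Icc_eq_integral_Ioc,
    ← integral_indicator measurableSet_Icc]
  congr 1; ext y
  by_cases h : y ∈ Icc (-T) T <;> simp [h]

lemma gauss_mass : (0.99:ℝ) ≤ ∫ y in (-10:ℝ)..10, phiN y := by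
  have h := gauss_ind 10 (by norm_num) (fun _ => 1)
  simp only [mul_one] at h
  rw [← h]
  have hsq := gauss_sq 0 0 1
  simp only [sub_zero, NNReal.coe_one] at hsq
  have hi : Integrable ((Icc (-10:ℝ) 10).indicator fun _ => (1:ℝ)) (gaussianReal 0 1) :=
    (integrable_const 1).indicator measurableSet_Icc
  have : ∫ y, (1 - y ^ 2 / 100) ∂(gaussianReal 0 1) ≤
      ∫ y, (Icc (-10:ℝ) 10).indicator (fun _ => (1:ℝ)) y ∂(gaussianReal 0 1) := by
    refine integral_mono ((integrable_const 1).sub ((gauss_memLp 0 1 2).div_const 100)) hi fun y => ?_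
    by_cases hy : y ∈ Icc (-10:ℝ) 10
    · simp [hy]; positivity
    · simp only [hy, not_false_eq_true, indicator_of_notMem]
      have : 100 ≤ y ^ 2 := by
        by_contra hc
        exact hy ⟨by nlinarith, by nlinarith⟩
      linarith
  rw [integral_sub (integrable_const 1) ((gauss_memLp 0 1 2).div_const 100), integral_div, hsq] at this
  simp at this
  norm_num at this ⊢
  linarith

def vS (τ y : ℝ) : ℝ := exp (y ^ 2 / 2) * (2 * τ / π) *
  (1 - π / 2 * τ - τ * y ^ 2 * (0.135 * exp (y ^ 2 / 2) + 0.92))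

def wS (τ y : ℝ) : ℝ := 32 * τ * ((8 * y ^ 2 + 8 * K4) * exp (y ^ 2 / 2))

lemma vS_le {τ : ℝ} (hτ : 0 < τ) (h1 : τ ≤ 0.1) (y : ℝ) : vS τ y ≤ postVar τ y := by
  have h1' : τ < 1 := by linarith
  refine le_trans ?_ (var_ge hτ h1' y)
  have B1 := b1 hτ h1' y
  have B2 := b2 hτ h1' y
  have B3 := b3 hτ h1' y
  have B4 := b4 hτ h1' y
  have W0 := Wk_zero_pos hτ h1' y
  have W2 : 0 ≤ Wk τ y 2 := by
    refine intervalIntegral.integral_nonneg zero_le_one fun x hx => ?_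
    have := (wt_pos (x := x) hτ h1').le
    positivity
  have p1 := Real.pi_gt_d4
  have p2 := Real.pi_lt_d4
  set E := exp (y ^ 2 / 2) with hE
  have hE1 : 1 ≤ E := Real.one_le_exp (by positivity)
  set P := π / 2 with hP
  have hPp : 0 < P := by positivity
  have hq : 2 * τ / π = τ / P := by rw [hP]; field_simp
  have hPt : P * τ ≤ 1 := by nlinarith
  set z := τ / P * (y ^ 2 * (5 + E) / 12) with hz
  have hz0 : 0 ≤ z := by positivity
  have hW : Wk τ y 0 * (τ / P) ≤ 1 + z := by
    calc Wk τ y 0 * (τ / P) ≤ (P / τ + y ^ 2 * (5 + E) / 12) * (τ / P) := by gcongr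
      _ = 1 + z := by rw [hz]; field_simp
  have hinv : (τ / P) * (1 - z) ≤ 1 / Wk τ y 0 := by
    rw [le_div_iff₀ W0]
    rcases le_total z 1 with h | h
    · nlinarith
    · have : (τ / P) * (1 - z) * Wk τ y 0 ≤ 0 := by
        apply mul_nonpos_of_nonpos_of_nonneg _ W0.le
        apply mul_nonpos_of_nonneg_of_nonpos (by positivity) (by linarith)
      linarith
  have t1 : E * (τ / P) * (1 - P * τ - z) ≤ (Wk τ y 2 + y ^ 2 * Wk τ y 4) / Wk τ y 0 := by
    calc E * (τ / P) * (1 - P * τ - z) ≤ E * (1 - P * τ) * ((τ / P) * (1 - z)) := by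
          have : 0 ≤ E * (τ / P) * (P * τ * z) := by positivity
          linarith
      _ ≤ E * (1 - P * τ) * (1 / Wk τ y 0) := by
          have : 0 ≤ 1 - P * τ := by linarith
          gcongr
      _ = (E * (1 - P * τ)) / Wk τ y 0 := by ring
      _ ≤ _ := by gcongr
  have hPτ : 0 < P - τ := by linarith
  have t2 : Wk τ y 2 / Wk τ y 0 ≤ (2 + E) / 3 * (τ / (P - τ)) := by
    rw [div_le_iff₀ W0]
    calc Wk τ y 2 ≤ (2 + E) / 3 := B2
      _ = (2 + E) / 3 * (τ / (P - τ)) * ((P - τ) / τ) := by field_simp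
      _ ≤ _ := by gcongr
  have t3 : (τ / (P - τ)) ^ 2 ≤ 0.729 * τ ^ 2 / P := by
    rw [div_pow, div_le_div_iff₀ (by positivity) hPp]
    have : P ≤ 0.729 * (P - τ) ^ 2 := by nlinarith
    nlinarith [sq_nonneg τ]
  have t4 : y ^ 2 * Wk τ y 2 ^ 2 / Wk τ y 0 / Wk τ y 0 ≤ E * (τ / P) * (τ * y ^ 2 * (0.081 * (E + 8))) := by
    calc y ^ 2 * Wk τ y 2 ^ 2 / Wk τ y 0 / Wk τ y 0 = y ^ 2 * (Wk τ y 2 / Wk τ y 0) ^ 2 := by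
          field_simp
      _ ≤ y ^ 2 * ((2 + E) / 3 * (τ / (P - τ))) ^ 2 := by gcongr
      _ = y ^ 2 * ((2 + E) ^ 2 / 9) * (τ / (P - τ)) ^ 2 := by ring
      _ ≤ y ^ 2 * (E * (E + 8) / 9) * (0.729 * τ ^ 2 / P) := by
          gcongr
          nlinarith
      _ = _ := by ring
  have t5 : z ≤ τ * y ^ 2 * (0.0531 * (5 + E)) := by
    have : 1 / P ≤ 0.6372 := by
      rw [div_le_iff₀ hPp]; linarith
    calc z = (1 / P) * (τ * y ^ 2 * (5 + E) / 12) := by rw [hz]; ring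
      _ ≤ 0.6372 * (τ * y ^ 2 * (5 + E) / 12) := by gcongr
      _ = _ := by ring
  rw [sub_div]
  unfold vS
  rw [hq, ← hE, ← hP]
  have t6 : E * (τ / P) * (1 - P * τ - τ * y ^ 2 * (0.135 * E + 0.92)) ≤
      E * (τ / P) * (1 - P * τ - z) - E * (τ / P) * (τ * y ^ 2 * (0.081 * (E + 8))) := by
    rw [← mul_sub]
    have hty : 0 ≤ τ * y ^ 2 := by positivity
    refine mul_le_mul_of_nonneg_left ?_ (by positivity)
    have hh : 0.0531 * (5 + E) + 0.081 * (E + 8) ≤ 0.135 * E + 0.92 := by linarith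
    have := mul_le_mul_of_nonneg_left hh hty
    linarith
  linarith

lemma phiE (y : ℝ) : phiN y * exp (y ^ 2 / 2) = (√(2 * π))⁻¹ := by
  rw [phiN, mul_assoc, ← Real.exp_add]
  rw [show -(y ^ 2) / 2 + y ^ 2 / 2 = 0 by ring]; simp

lemma int_sq (T : ℝ) : ∫ y in (-T)..T, y ^ 2 = 2 * T ^ 3 / 3 := by
  rw [integral_pow]; norm_num; ring

lemma int_sq_exp (T : ℝ) (hT : 0 ≤ T) : ∫ y in (-T)..T, y ^ 2 * exp (y ^ 2 / 2) ≤ 2 * T * exp (T ^ 2 / 2) := by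
  have h : ∀ x ∈ uIcc (-T) T, HasDerivAt (fun x : ℝ => x * exp (x ^ 2 / 2))
      ((1 + x ^ 2) * exp (x ^ 2 / 2)) x := by
    intro x _
    have h1 : HasDerivAt (fun x : ℝ => x ^ 2 / 2) x x := by
      have := (hasDerivAt_pow 2 x).div_const 2
      refine this.congr_deriv ?_
      simp
    refine ((hasDerivAt_id x).mul h1.exp).congr_deriv ?_
    simp; ring
  have e := intervalIntegral.integral_eq_sub_of_hasDerivAt h (Continuous.intervalIntegrable (by fun_prop) _ _)
  have : ∫ y in (-T)..T, y ^ 2 * exp (y ^ 2 / 2) ≤ ∫ y in (-T)..T, (1 + y ^ 2) * exp (y ^ 2 / 2) := by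
    refine intervalIntegral.integral_mono_on (by linarith) (Continuous.intervalIntegrable (by fun_prop) _ _)
      (Continuous.intervalIntegrable (by fun_prop) _ _) fun x hx => ?_
    have := exp_pos (x ^ 2 / 2)
    nlinarith
  refine this.trans (le_of_eq ?_)
  rw [e]
  simp only [neg_sq]; ring

lemma wS_int (τ T : ℝ) (hτ : 0 < τ) (hT : 0 ≤ T) :
    ∫ y in (-T)..T, phiN y * wS τ y ≤ 512 * τ * T * (T ^ 2 + K4) := by
  have hK := K4_nonneg
  have hs : (√(2 * π))⁻¹ ≤ 1 := by
    apply inv_le_one_of_one_le₀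
    rw [Real.one_le_sqrt]; linarith [Real.pi_gt_three]
  have : ∫ y in (-T)..T, phiN y * wS τ y ≤ ∫ y in (-T)..T, (256 * τ * (T ^ 2 + K4)) := by
    have hc := phiN_continuous
    refine intervalIntegral.integral_mono_on (by linarith)
      (Continuous.intervalIntegrable (by unfold wS; fun_prop) _ _)
      (Continuous.intervalIntegrable (by fun_prop) _ _) fun y hy => ?_
    have hy2 : y ^ 2 ≤ T ^ 2 := by nlinarith [hy.1, hy.2]
    calc phiN y * wS τ y = (phiN y * exp (y ^ 2 / 2)) * (256 * τ * (y ^ 2 + K4)) := by unfold wS; ring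
      _ ≤ 1 * (256 * τ * (T ^ 2 + K4)) := by
        rw [phiE]; gcongr
      _ = _ := by ring
  refine this.trans (le_of_eq ?_)
  simp; ring

lemma small_int {τ : ℝ} (hτ : 0 < τ) (h1 : τ ≤ 0.1) :
    0.253 * τ * (zet τ + 0.01) ≤ ∫ y in (-(zet τ / √2))..(zet τ / √2), phiN y * vS τ y := by
  set T := zet τ / √2 with hT
  have h2 : (0:ℝ) < √2 := by positivity
  have hz0 : 0 ≤ zet τ := Real.sqrt_nonneg _
  have hT0 : 0 ≤ T := by positivity
  have hzT : zet τ = √2 * T := by rw [hT]; field_simp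
  have hL : log 2 * 3 ≤ log (1 / τ) := by
    have : (2:ℝ) ^ 3 ≤ 1 / τ := by rw [le_div_iff₀ hτ]; linarith
    have := Real.log_le_log (by norm_num) this
    rw [Real.log_pow] at this
    push_cast at this; linarith
  have hl2 := Real.log_two_gt_d9
  have hT2 : T ^ 2 = log (1 / τ) := by
    rw [hT, div_pow, zet, Real.sq_sqrt (by linarith), Real.sq_sqrt (by norm_num)]; ring
  set s := √τ with hs
  have hs0 : 0 < s := Real.sqrt_pos.2 hτ
  have hs2 : s ^ 2 = τ := Real.sq_sqrt hτ.le
  have hs3 : s ≤ 0.3163 := by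
    rw [hs, Real.sqrt_le_left (by norm_num)]; linarith
  have hexp : exp (T ^ 2 / 2) = 1 / s := by
    rw [hT2, show log (1 / τ) / 2 = log (1 / s) by
      rw [← hs2, one_div, one_div, Real.log_inv, Real.log_inv, Real.log_pow]; push_cast; ring]
    rw [Real.exp_log (by positivity)]
  have hlog : τ * T ^ 2 ≤ 0.736 * s := by
    have e1 : log (1 / τ) = 2 * log (1 / s) := by
      rw [← hs2, one_div, one_div, Real.log_inv, Real.log_inv, Real.log_pow]; push_cast; ring
    have e2 := Real.log_le_sub_one_of_pos (show 0 < (1 / s) / exp 1 by positivity)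
    rw [Real.log_div (by positivity) (exp_pos 1).ne', Real.log_exp] at e2
    have e3 := Real.exp_one_gt_d9
    have e4 : (1 / s) / exp 1 ≤ 0.368 * (1 / s) := by
      rw [div_le_iff₀ (exp_pos 1)]
      have : 0 < 1 / s := by positivity
      nlinarith
    calc τ * T ^ 2 = s ^ 2 * (2 * log (1 / s)) := by rw [hT2, e1, hs2]
      _ ≤ s ^ 2 * (2 * (0.368 * (1 / s))) := by gcongr; linarith
      _ = 0.736 * s := by field_simp; norm_num
  have hTlow : 1.4 ≤ T := by nlinarith
  set J := ∫ y in (-T)..T, y ^ 2 * exp (y ^ 2 / 2) with hJ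
  have hJ1 : J ≤ 2 * T * (1 / s) := by rw [← hexp]; exact int_sq_exp T hT0
  have hpi1 := Real.pi_gt_d4
  have hpi2 := Real.pi_lt_d4
  have e : ∫ y in (-T)..T, phiN y * vS τ y = (√(2 * π))⁻¹ * (2 * τ / π) *
      (2 * T * (1 - π / 2 * τ) - τ * (0.135 * J + 0.92 * (2 * T ^ 3 / 3))) := by
    have : ∀ y, phiN y * vS τ y = (√(2 * π))⁻¹ * (2 * τ / π) *
      ((1 - π / 2 * τ) - τ * (0.135 * (y ^ 2 * exp (y ^ 2 / 2)) + 0.92 * y ^ 2)) := by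
      intro y; rw [← phiE y]; unfold vS; ring
    simp_rw [this]
    rw [intervalIntegral.integral_const_mul, intervalIntegral.integral_sub (by simp)
      (Continuous.intervalIntegrable (by fun_prop) _ _), intervalIntegral.integral_const_mul,
      intervalIntegral.integral_add (Continuous.intervalIntegrable (by fun_prop) _ _)
      (Continuous.intervalIntegrable (by fun_prop) _ _), intervalIntegral.integral_const_mul,
      intervalIntegral.integral_const_mul, int_sq]
    simp only [intervalIntegral.integral_const, smul_eq_mul]
    ring
  rw [e]
  have k1 : 2 * T * 0.7287 ≤ 2 * T * (1 - π / 2 * τ) - τ * (0.135 * J + 0.92 * (2 * T ^ 3 / 3)) := by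
    have a1 : τ * J ≤ 2 * T * s := by
      calc τ * J ≤ τ * (2 * T * (1 / s)) := by gcongr
        _ = 2 * T * s := by rw [← hs2]; field_simp
    have a2 : π / 2 * τ ≤ 0.15708 := by nlinarith
    have a3 : 0.7287 ≤ 1 - π / 2 * τ - 0.135 * s - 0.92 / 3 * (τ * T ^ 2) := by linarith
    have := mul_le_mul_of_nonneg_left a3 (show 0 ≤ 2 * T by positivity)
    nlinarith
  have k2 : 0.3989 ≤ (√(2 * π))⁻¹ := by
    rw [le_inv_comm₀ (by norm_num) (by positivity), Real.sqrt_le_left (by norm_num)]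
    norm_num; linarith
  have k3 : 0.6366 * τ ≤ 2 * τ / π := by
    rw [le_div_iff₀ (by positivity)]; nlinarith
  have k4 : √2 ≤ 1.41422 := by
    rw [Real.sqrt_le_left (by norm_num)]; norm_num
  calc 0.253 * τ * (zet τ + 0.01) ≤ 0.3989 * (0.6366 * τ) * (2 * T * 0.7287) := by
        rw [hzT]
        have : √2 * T ≤ 1.41422 * T := by gcongr
        nlinarith
    _ ≤ _ := by gcongr

/-- mid regime -/
lemma mid_real (τ k s : ℝ) (hτ : 0 < τ) (h1 : τ < 1) (hk : 0 ≤ k)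
    (hsb : s ^ 2 ≤ 1 - τ ^ 2) (hp : (1.5708 - τ) * (τ + k * (1 - τ ^ 2)) ≤ s) (y : ℝ) :
    k * τ ≤ postVar τ y := by
  apply var_ge_mid hτ h1
  have hb : 0 < 1 - τ ^ 2 := by nlinarith
  have hq := Real.sqrt_pos.2 hb
  have h2 := Dw_le_two hτ h1
  have hss : s ≤ √(1 - τ ^ 2) := Real.le_sqrt_of_sq_le hsb
  have : 0 ≤ τ + k * (1 - τ ^ 2) := by positivity
  have p2 := Real.pi_lt_d4
  calc Dw τ * (τ ^ 2 + k * τ * (1 - τ ^ 2)) ≤ (π / 2 - τ) / (τ * √(1 - τ ^ 2)) * (τ ^ 2 + k * τ * (1 - τ ^ 2)) := by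
        gcongr
    _ = (π / 2 - τ) * (τ + k * (1 - τ ^ 2)) / √(1 - τ ^ 2) := by field_simp
    _ ≤ 1 := by
      rw [div_le_one hq]
      calc _ ≤ (1.5708 - τ) * (τ + k * (1 - τ ^ 2)) := by gcongr; linarith
        _ ≤ _ := hp.trans hss

lemma zet_le (τ a Z : ℝ) (l m : ℕ) (ha : 0 < a) (hm : 0 < m) (haτ : a ≤ τ) (hZ : 0 ≤ Z)
    (h : (1 / a) ^ m ≤ 2 ^ l) (h2 : l * 0.6931471808 ≤ m * (Z ^ 2 / 2)) : zet τ ≤ Z := by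
  rw [zet, Real.sqrt_le_left hZ]
  have h3 := Real.log_le_log (by positivity) h
  rw [Real.log_pow, Real.log_pow] at h3
  have h4 : log (1 / τ) ≤ log (1 / a) :=
    Real.log_le_log (by have := ha.trans_le haτ; positivity) (one_div_le_one_div_of_le ha haτ)
  have hl := Real.log_two_lt_d9
  have hm' : (0:ℝ) < m := by exact_mod_cast hm
  have : (m:ℝ) * log (1 / a) ≤ m * (Z ^ 2 / 2) := by
    have : (l:ℝ) * log 2 ≤ l * 0.6931471808 := by gcongr
    linarith
  have := le_of_mul_le_mul_left this hm'
  linarith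

lemma mid_all {τ : ℝ} (hτ : 0.1 ≤ τ) (h1 : τ < 1) :
    ∃ k : ℝ, (∀ y, k * τ ≤ postVar τ y) ∧ 0.253 * (zet τ + 0.01) ≤ 0.99 * k ∧ 0 ≤ k := by
  have h0 : 0 < τ := by linarith
  rcases le_total τ 0.15 with h | h
  · have := zet_le τ 0.1 2.15 10 3 (by norm_num) (by norm_num) hτ (by norm_num) (by norm_num) (by norm_num)
    exact ⟨0.553, mid_real τ _ 0.988 h0 h1 (by norm_num) (by nlinarith) (by nlinarith),
      by linarith, by norm_num⟩
  rcases le_total τ 0.25 with h' | h'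
  · have := zet_le τ 0.15 1.953 11 4 (by norm_num) (by norm_num) h (by norm_num) (by norm_num) (by norm_num)
    exact ⟨0.502, mid_real τ _ 0.968 h0 h1 (by norm_num) (by nlinarith) (by nlinarith),
      by linarith, by norm_num⟩
  clear h
  rcases le_total τ 0.4 with h | h
  · have := zet_le τ 0.25 1.666 2 1 (by norm_num) (by norm_num) h' (by norm_num) (by norm_num) (by norm_num)
    exact ⟨0.429, mid_real τ _ 0.916 h0 h1 (by norm_num) (by nlinarith) (by nlinarith),
      by linarith, by norm_num⟩
  clear h'
  rcases le_total τ 0.5 with h' | h'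
  · have := zet_le τ 0.4 1.36 4 3 (by norm_num) (by norm_num) h (by norm_num) (by norm_num) (by norm_num)
    exact ⟨0.351, mid_real τ _ 0.866 h0 h1 (by norm_num) (by nlinarith) (by nlinarith),
      by linarith, by norm_num⟩
  clear h
  rcases le_total τ 0.6 with h | h
  · have := zet_le τ 0.5 1.178 1 1 (by norm_num) (by norm_num) h' (by norm_num) (by norm_num) (by norm_num)
    exact ⟨0.304, mid_real τ _ 0.8 h0 h1 (by norm_num) (by nlinarith) (by nlinarith),
      by linarith, by norm_num⟩
  clear h'
  rcases le_total τ 0.65 with h' | h'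
  · have := zet_le τ 0.6 1.02 3 4 (by norm_num) (by norm_num) h (by norm_num) (by norm_num) (by norm_num)
    exact ⟨0.264, mid_real τ _ 0.7595 h0 h1 (by norm_num) (by nlinarith) (by nlinarith),
      by linarith, by norm_num⟩
  have := zet_le τ 0.65 0.962 2 3 (by norm_num) (by norm_num) h' (by norm_num) (by norm_num) (by norm_num)
  refine ⟨0.26, fun y => ?_, by linarith, by norm_num⟩
  have hr : 0.26 * τ ≤ τ ^ 2 / (2 + τ ^ 2) := by
    rw [le_div_iff₀ (by positivity)]
    have : 0.26 * (2 + τ ^ 2) ≤ τ := by nlinarith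
    nlinarith
  refine hr.trans (var_ge_mid h0 h1 y _ ?_)
  have hD := Dw_le_three h0 h1
  have hb : 0 < 1 - τ ^ 2 := by nlinarith
  calc _ ≤ (1 + 2 / 3 * (1 - τ ^ 2) / τ ^ 2) * (τ ^ 2 + τ ^ 2 / (2 + τ ^ 2) * (1 - τ ^ 2)) := by gcongr
    _ = 1 := by field_simp; ring

lemma key : ∃ C : ℝ, 0 < C ∧ ∀ τ : ℝ, 0 < τ → τ < 1 → ∃ (T : ℝ) (v w : ℝ → ℝ), Continuous v ∧ Continuous w ∧
    (∀ y, v y ≤ postVar τ y) ∧ (∀ y, postMom4 τ y ≤ w y) ∧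
    0.253 * τ * (zet τ + 0.01) ≤ ∫ y, (Icc (-T) T).indicator v y ∂(gaussianReal 0 1) ∧
    ∫ y, (Icc (-T) T).indicator w y ∂(gaussianReal 0 1) ≤ C * τ * (1 + zet τ) ^ 3 := by
  have hK := K4_nonneg
  refine ⟨512000 * (1 + K4), by positivity, fun τ hτ h1 => ?_⟩
  have hz0 : 0 ≤ zet τ := Real.sqrt_nonneg _
  rcases le_total τ 0.1 with h | h
  · have hT0 : 0 ≤ zet τ / √2 := by positivity
    have hTz : zet τ / √2 ≤ zet τ := by
      apply div_le_self hz0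
      rw [Real.one_le_sqrt]; norm_num
    refine ⟨zet τ / √2, vS τ, wS τ, by unfold vS; fun_prop, by unfold wS; fun_prop, vS_le hτ h,
      mom4_le hτ h1, ?_, ?_⟩
    · rw [gauss_ind _ hT0]; exact small_int hτ h
    · rw [gauss_ind _ hT0]
      refine (wS_int τ _ hτ hT0).trans ?_
      set T := zet τ / √2
      have a1 : T * (T ^ 2 + K4) ≤ (1 + K4) * (1 + zet τ) ^ 3 := by
        calc T * (T ^ 2 + K4) ≤ (1 + zet τ) * ((1 + zet τ) ^ 2 + K4 * (1 + zet τ) ^ 2) := by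
              have : 1 ≤ (1 + zet τ) ^ 2 := one_le_pow₀ (by linarith)
              gcongr
              · linarith
              · linarith
              · nlinarith
          _ = _ := by ring
      have a2 : 0 ≤ (1 + K4) * (1 + zet τ) ^ 3 := by positivity
      nlinarith
  · obtain ⟨k, hk, hk2, hk0⟩ := mid_all h h1
    refine ⟨10, fun _ => k * τ, wS τ, by fun_prop, by unfold wS; fun_prop, hk, mom4_le hτ h1, ?_, ?_⟩
    · rw [gauss_ind _ (by norm_num), intervalIntegral.integral_mul_const]
      have := gauss_mass
      calc 0.253 * τ * (zet τ + 0.01) ≤ 0.99 * (k * τ) := by nlinarith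
        _ ≤ _ := by gcongr
    · rw [gauss_ind _ (by norm_num)]
      refine (wS_int τ _ hτ (by norm_num)).trans ?_
      have a1 : 1 ≤ (1 + zet τ) ^ 3 := one_le_pow₀ (by linarith)
      calc _ ≤ 512000 * (1 + K4) * τ * 1 := by nlinarith
        _ ≤ _ := by gcongr

lemma exp_neg_quad (x : ℝ) (hx : 0 ≤ x) : exp (-x) ≤ 1 - x + x ^ 2 / 2 := by
  have h := Real.quadratic_le_exp_of_nonneg hx
  have h2 : exp x * exp (-x) = 1 := by rw [← Real.exp_add]; simp
  have h3 : 0 < 1 - x + x ^ 2 / 2 := by nlinarith [sq_nonneg (x - 1)]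
  have h4 : 1 ≤ (1 - x + x ^ 2 / 2) * exp x := by
    calc (1:ℝ) ≤ (1 - x + x ^ 2 / 2) * (1 + x + x ^ 2 / 2) := by nlinarith [sq_nonneg (x ^ 2)]
      _ ≤ _ := by gcongr
  calc exp (-x) = 1 * exp (-x) := by ring
    _ ≤ (1 - x + x ^ 2 / 2) * exp x * exp (-x) := by gcongr
    _ = 1 - x + x ^ 2 / 2 := by rw [mul_assoc, h2, mul_one]

lemma laplace {τ : ℝ} (hτ : 0 < τ) (h1 : τ < 1) (y lam v w : ℝ) (hl : 0 ≤ lam)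
    (hv : v ≤ postVar τ y) (hw : postMom4 τ y ≤ w) :
    Integrable (fun θ => postDens τ y θ * exp (-(lam * (θ - postMean τ y) ^ 2))) ∧
    ∫ θ, postDens τ y θ * exp (-(lam * (θ - postMean τ y) ^ 2)) ≤
      margDens τ y * (1 - lam * v + lam ^ 2 * w / 2) := by
  have hM := marg_pos hτ h1 y
  have i0 := (pd_marg hτ y).1
  have i2 := (pd_quad hτ h1 y (postMean τ y)).1
  have i4 := (pd_four_c hτ y (postMean τ y)).1
  have hI : Integrable (fun θ => postDens τ y θ * exp (-(lam * (θ - postMean τ y) ^ 2))) := by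
    refine i0.mono (i0.1.mul (by fun_prop)) (ae_of_all _ fun θ => ?_)
    rw [norm_mul]
    refine mul_le_of_le_one_right (norm_nonneg _) ?_
    rw [Real.norm_eq_abs, abs_of_pos (exp_pos _), Real.exp_le_one_iff]
    have : 0 ≤ lam * (θ - postMean τ y) ^ 2 := by positivity
    linarith
  refine ⟨hI, ?_⟩
  have hle : ∫ θ, postDens τ y θ * exp (-(lam * (θ - postMean τ y) ^ 2)) ≤
      ∫ θ, (postDens τ y θ - lam * ((θ - postMean τ y) ^ 2 * postDens τ y θ)
        + lam ^ 2 / 2 * ((θ - postMean τ y) ^ 4 * postDens τ y θ)) := by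
    refine integral_mono hI ((i0.sub (i2.const_mul lam)).add (i4.const_mul _)) fun θ => ?_
    have a := exp_neg_quad (lam * (θ - postMean τ y) ^ 2) (by positivity)
    have b := mul_le_mul_of_nonneg_left a (pd_nonneg hτ y θ)
    refine b.trans (le_of_eq ?_)
    ring
  refine hle.trans ?_
  have i02 : Integrable fun θ => postDens τ y θ - lam * ((θ - postMean τ y) ^ 2 * postDens τ y θ) :=
    i0.sub (i2.const_mul lam)
  rw [integral_add i02 (i4.const_mul _), integral_sub i0 (i2.const_mul lam),
    integral_const_mul, integral_const_mul]
  have e2 : ∫ θ, (θ - postMean τ y) ^ 2 * postDens τ y θ = postVar τ y * margDens τ y := by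
    rw [postVar]; field_simp
  have e4 : ∫ θ, (θ - postMean τ y) ^ 4 * postDens τ y θ = postMom4 τ y * margDens τ y := by
    rw [postMom4]; field_simp
  rw [e2, e4, show ∫ θ, postDens τ y θ = margDens τ y from rfl]
  have a : lam * (v * margDens τ y) ≤ lam * (postVar τ y * margDens τ y) := by gcongr
  have b : lam ^ 2 / 2 * (postMom4 τ y * margDens τ y) ≤ lam ^ 2 / 2 * (w * margDens τ y) := by gcongr
  linarith

lemma chern_pw {N : ℕ} {τ : ℝ} (hτ : 0 < τ) (y θ : Fin N → ℝ) (S : Finset (Fin N))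
    (lam t0 r : ℝ) (hl : 0 ≤ lam) (ht : 0 ≤ t0) (hr : r < t0)
    (hθ : l2dist θ (fullPostMean τ y) ≤ r) :
    fullDens τ y θ ≤ exp (lam * t0 ^ 2) * ∏ i, postDens τ (y i) (θ i) *
      (if i ∈ S then exp (-(lam * (θ i - postMean τ (y i)) ^ 2)) else 1) := by
  have hsum : ∑ i, (θ i - postMean τ (y i)) ^ 2 ≤ t0 ^ 2 := by
    have h2 : √(∑ i, (θ i - postMean τ (y i)) ^ 2) ≤ t0 := by
      refine le_trans ?_ hr.le
      simpa only [l2dist, fullPostMean] using hθ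
    rwa [Real.sqrt_le_left ht] at h2
  have hpart : ∑ i ∈ S, (θ i - postMean τ (y i)) ^ 2 ≤ t0 ^ 2 :=
    (Finset.sum_le_univ_sum_of_nonneg fun i => sq_nonneg _).trans hsum
  have e : (∏ i, postDens τ (y i) (θ i) *
      (if i ∈ S then exp (-(lam * (θ i - postMean τ (y i)) ^ 2)) else 1)) =
      fullDens τ y θ * exp (-(lam * ∑ i ∈ S, (θ i - postMean τ (y i)) ^ 2)) := by
    simp only [Finset.prod_mul_distrib, fullDens]
    congr 1
    rw [Finset.prod_ite_mem, Finset.univ_inter, ← Real.exp_sum, Finset.sum_neg_distrib, Finset.mul_sum]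
  rw [e]
  have hfd : 0 ≤ fullDens τ y θ := Finset.prod_nonneg fun i _ => pd_nonneg hτ _ _
  calc fullDens τ y θ = fullDens τ y θ * 1 := by ring
    _ ≤ fullDens τ y θ * exp (lam * t0 ^ 2 - lam * ∑ i ∈ S, (θ i - postMean τ (y i)) ^ 2) := by
      gcongr
      apply Real.one_le_exp
      nlinarith
    _ = _ := by rw [sub_eq_add_neg, Real.exp_add]; ring

lemma full_int {N : ℕ} {τ : ℝ} (hτ : 0 < τ) (y : Fin N → ℝ) :
    Integrable (fullDens τ y) ∧ ∫ θ, fullDens τ y θ = ∏ i, margDens τ (y i) := by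
  constructor
  · exact Integrable.fintype_prod (f := fun i => postDens τ (y i)) (fun i => (pd_marg hτ (y i)).1)
  · exact integral_fintype_prod_volume_eq_prod (fun i => postDens τ (y i))

lemma chern_aux {N : ℕ} {A : Set (Fin N → ℝ)} (hA : MeasurableSet A) (D : (Fin N → ℝ) → ℝ)
    (hD : Integrable D) (f : Fin N → ℝ → ℝ) (hf0 : ∀ i θ, 0 ≤ f i θ) (hfi : ∀ i, Integrable (f i))
    (c : ℝ) (hc : 0 ≤ c) (hle : ∀ θ ∈ A, D θ ≤ c * ∏ i, f i (θ i)) (b : Fin N → ℝ)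
    (hb : ∀ i, ∫ θ, f i θ ≤ b i) : ∫ θ in A, D θ ≤ c * ∏ i, b i := by
  have hgI : Integrable (fun θ : Fin N → ℝ => c * ∏ i, f i (θ i)) :=
    (Integrable.fintype_prod hfi).const_mul _
  calc ∫ θ in A, D θ ≤ ∫ θ in A, c * ∏ i, f i (θ i) :=
        setIntegral_mono_on hD.integrableOn hgI.integrableOn hA hle
    _ ≤ ∫ θ : Fin N → ℝ, c * ∏ i, f i (θ i) :=
        setIntegral_le_integral hgI (ae_of_all _ fun θ : Fin N → ℝ =>
          mul_nonneg hc (Finset.prod_nonneg fun i _ => hf0 i _))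
    _ = c * ∏ i, ∫ θ, f i θ := by
        rw [integral_const_mul, integral_fintype_prod_volume_eq_prod]
    _ ≤ c * ∏ i, b i := by
        refine mul_le_mul_of_nonneg_left ?_ hc
        exact Finset.prod_le_prod (fun i _ => integral_nonneg (hf0 i)) fun i _ => hb i

lemma chern {N : ℕ} {τ : ℝ} (hτ : 0 < τ) (h1 : τ < 1) (y : Fin N → ℝ) (S : Finset (Fin N))
    (lam t0 r : ℝ) (hl : 0 ≤ lam) (v w : ℝ → ℝ) (hv : ∀ y, v y ≤ postVar τ y)
    (hw : ∀ y, postMom4 τ y ≤ w y) (ht : 0 ≤ t0) (hr : r < t0) :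
    fullPostProb τ y {θ | l2dist θ (fullPostMean τ y) ≤ r} ≤
      exp (lam * t0 ^ 2) * ∏ i, (if i ∈ S then 1 - lam * v (y i) + lam ^ 2 * w (y i) / 2 else 1) := by
  have hfullpos : 0 < ∏ i, margDens τ (y i) := Finset.prod_pos fun i _ => marg_pos hτ h1 (y i)
  have hA : MeasurableSet {θ : Fin N → ℝ | l2dist θ (fullPostMean τ y) ≤ r} := by
    apply measurableSet_le _ measurable_const
    unfold l2dist
    fun_prop
  rw [fullPostProb, (full_int hτ y).2, div_le_iff₀ hfullpos]
  have := chern_aux hA (fullDens τ y) (full_int hτ y).1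
    (fun i θ => postDens τ (y i) θ * (if i ∈ S then exp (-(lam * (θ - postMean τ (y i)) ^ 2)) else 1))
    (fun i θ => mul_nonneg (pd_nonneg hτ _ _) (by split_ifs <;> positivity))
    (fun i => by
      by_cases h : i ∈ S
      · simp only [h, if_true]; exact (laplace hτ h1 (y i) lam _ _ hl (hv _) (hw _)).1
      · simp only [h, if_false, mul_one]; exact (pd_marg hτ (y i)).1)
    (exp (lam * t0 ^ 2)) (exp_pos _).le
    (fun θ hθ => chern_pw hτ y θ S lam t0 r hl ht hr hθ)
    (fun i => margDens τ (y i) * (if i ∈ S then 1 - lam * v (y i) + lam ^ 2 * w (y i) / 2 else 1))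
    (fun i => by
      by_cases h : i ∈ S
      · simp only [h, if_true]; exact (laplace hτ h1 (y i) lam _ _ hl (hv _) (hw _)).2
      · simp only [h, if_false, mul_one]; exact le_of_eq (by rw [margDens]))
  refine this.trans (le_of_eq ?_)
  rw [Finset.prod_mul_distrib]; ring

lemma partC {N : ℕ} {τ : ℝ} (hτ : 0 < τ) (h1 : τ < 1) (θ₀ : Fin N → ℝ) (α : ℝ) (hα : α < 1)
    (r : (Fin N → ℝ) → ℝ)
    (hr : ∀ y, fullPostProb τ y {θ | l2dist θ (fullPostMean τ y) ≤ r y} = 1 - α)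
    (T : ℝ) (v w : ℝ → ℝ) (hvc : Continuous v) (hwc : Continuous w) (hv : ∀ y, v y ≤ postVar τ y)
    (hw : ∀ y, postMom4 τ y ≤ w y) (μ σ t0 : ℝ) (hσ : 0 < σ) (ht : 0 ≤ t0)
    (hμ : μ ≤ ∫ y, (Icc (-T) T).indicator v y ∂(gaussianReal 0 1))
    (hσ2 : ∫ y, (Icc (-T) T).indicator w y ∂(gaussianReal 0 1) ≤ σ)
    (m : ℕ) (hm : m = (Finset.univ.filter fun i => θ₀ i = 0).card) (hmt : t0 ^ 2 < m * μ) :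
    (Pdata θ₀).real {y | r y < t0} ≤ exp (-((m * μ - t0 ^ 2) ^ 2 / (2 * m * σ))) / (1 - α) := by
  classical
  have hα' : 0 < 1 - α := by linarith
  have hm0 : (0:ℝ) < m := by
    rcases Nat.eq_zero_or_pos m with h | h
    · rw [h] at hmt; simp at hmt; nlinarith [sq_nonneg t0]
    · exact_mod_cast h
  have : IsProbabilityMeasure (Pdata θ₀) := by unfold Pdata; infer_instance
  set lam := (m * μ - t0 ^ 2) / (m * σ) with hlam
  have hl : 0 ≤ lam := div_nonneg (by linarith) (by positivity)
  set q : ℝ → ℝ := fun y => - lam * v y + lam ^ 2 / 2 * w y with hq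
  set H : ℝ → ℝ := fun y => 1 + (Icc (-T) T).indicator q y with hH
  have indI : ∀ u : ℝ → ℝ, Continuous u → Integrable ((Icc (-T) T).indicator u) (gaussianReal 0 1) := by
    intro u hu
    rw [integrable_indicator_iff measurableSet_Icc]
    exact hu.continuousOn.integrableOn_compact isCompact_Icc
  have hqc : Continuous q := by rw [hq]; fun_prop
  have hHI : Integrable H (gaussianReal 0 1) := (integrable_const 1).add (indI q hqc)
  have hH0 : ∀ y, 0 ≤ H y := by
    intro y
    by_cases h : y ∈ Icc (-T) T
    · simp only [hH, h, indicator_of_mem, hq]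
      have a := (laplace hτ h1 y lam _ _ hl (hv y) (hw y)).2
      have b : 0 ≤ ∫ θ, postDens τ y θ * exp (-(lam * (θ - postMean τ y) ^ 2)) :=
        integral_nonneg fun θ => mul_nonneg (pd_nonneg hτ y θ) (exp_pos _).le
      have c := nonneg_of_mul_nonneg_right (b.trans a) (marg_pos hτ h1 y)
      linarith
    · simp [hH, h]
  have hHint : ∫ y, H y ∂(gaussianReal 0 1) ≤ exp (-lam * μ + lam ^ 2 / 2 * σ) := by
    have e1 : ∫ y, H y ∂(gaussianReal 0 1) = 1 + (-lam * ∫ y, (Icc (-T) T).indicator v y ∂(gaussianReal 0 1)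
        + lam ^ 2 / 2 * ∫ y, (Icc (-T) T).indicator w y ∂(gaussianReal 0 1)) := by
      rw [hH, integral_add (integrable_const 1) (indI q hqc), ← integral_const_mul, ← integral_const_mul,
        ← integral_add ((indI v hvc).const_mul _) ((indI w hwc).const_mul _)]
      simp only [integral_const, probReal_univ, smul_eq_mul, mul_one]
      congr 2; ext y
      by_cases h : y ∈ Icc (-T) T <;> simp [h, hq]
    have := Real.add_one_le_exp (-lam * μ + lam ^ 2 / 2 * σ)
    have a := mul_le_mul_of_nonneg_left hμ hl
    have b := mul_le_mul_of_nonneg_left hσ2 (show 0 ≤ lam ^ 2 / 2 by positivity)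
    rw [e1]; linarith
  let G : Fin N → ℝ → ℝ := fun i => if θ₀ i = 0 then H else fun _ => 1
  have hGI : ∀ i, Integrable (G i) (gaussianReal (θ₀ i) 1) := by
    intro i
    by_cases h : θ₀ i = 0
    · simp only [G, h, if_true]; exact hHI
    · simp only [G, h, if_false]; exact integrable_const 1
  have hG0 : ∀ i y, 0 ≤ G i y := by
    intro i y
    by_cases h : θ₀ i = 0
    · simp only [G, h, if_true]; exact hH0 y
    · simp [G, h]
  let F : (Fin N → ℝ) → ℝ := fun y => exp (lam * t0 ^ 2) * ∏ i, G i (y i)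
  have hFI : Integrable F (Pdata θ₀) := by
    unfold Pdata
    exact (Integrable.fintype_prod hGI).const_mul _
  have hF0 : ∀ y, 0 ≤ F y := fun y => mul_nonneg (exp_pos _).le (Finset.prod_nonneg fun i _ => hG0 i _)
  have hFint : ∫ y, F y ∂(Pdata θ₀) ≤ exp (-((m * μ - t0 ^ 2) ^ 2 / (2 * m * σ))) := by
    have e1 : ∫ y, F y ∂(Pdata θ₀) = exp (lam * t0 ^ 2) * (∫ y, H y ∂(gaussianReal 0 1)) ^ m := by
      simp only [F]
      rw [integral_const_mul, Pdata, integral_fintype_prod_eq_prod]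
      congr 1
      rw [hm, ← Finset.prod_const, Finset.prod_filter]
      refine Finset.prod_congr rfl fun i _ => ?_
      by_cases h : θ₀ i = 0
      · simp [G, h]
      · simp [G, h]
    rw [e1]
    calc _ ≤ exp (lam * t0 ^ 2) * (exp (-lam * μ + lam ^ 2 / 2 * σ)) ^ m := by
          have : 0 ≤ ∫ y, H y ∂(gaussianReal 0 1) := integral_nonneg fun y => hH0 y
          gcongr
      _ = exp (lam * t0 ^ 2 + m * (-lam * μ + lam ^ 2 / 2 * σ)) := by
          rw [← Real.exp_nat_mul, ← Real.exp_add]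
      _ = _ := by
          congr 1
          rw [hlam]; field_simp; ring
  have hsub : {y | r y < t0} ⊆ {y | 1 - α ≤ F y} := by
    intro y hy
    have := chern hτ h1 y (Finset.univ.filter fun i => θ₀ i = 0 ∧ y i ∈ Icc (-T) T) lam t0 (r y) hl v w hv hw ht hy
    rw [hr y] at this
    refine this.trans (le_of_eq ?_)
    simp only [F]
    congr 1
    refine Finset.prod_congr rfl fun i _ => ?_
    by_cases h : θ₀ i = 0
    · by_cases h' : y i ∈ Icc (-T) T
      · simp only [Finset.mem_filter, Finset.mem_univ, h, h', and_self, if_true, G, hH, indicator_of_mem, hq]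
        ring
      · simp only [Finset.mem_filter, Finset.mem_univ, h, h', and_false, if_false, G, if_true, hH,
          not_false_eq_true, indicator_of_notMem, add_zero]
    · simp [G, h]
  have hmk := mul_meas_ge_le_integral_of_nonneg (μ := Pdata θ₀) (ae_of_all _ hF0) hFI (1 - α)
  rw [le_div_iff₀ hα']
  have := measureReal_mono (μ := Pdata θ₀) hsub
  nlinarith

lemma zet_pos_lt {τ : ℝ} (hτ : 0 < τ) (hz : 0 < zet τ) : τ < 1 := by
  rw [zet, Real.sqrt_pos] at hz
  by_contra h
  have h2 : 1 / τ ≤ 1 := by rw [div_le_one hτ]; linarith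
  have := Real.log_nonpos (by positivity) h2
  linarith

lemma rate_ge {τ N B : ℝ} (hτ : 0 < τ) (hN : 0 < N) (hz : 0 < zet τ) (hB : 0 ≤ B)
    (h1 : 2 * B ≤ N * τ / zet τ) (h2 : 4 * B ≤ N) : B ≤ N * τ / (1 + zet τ) := by
  rw [le_div_iff₀ (by positivity)]
  rw [le_div_iff₀ hz] at h1
  rcases le_total 1 (zet τ) with h | h
  · nlinarith
  · have : 1 / 2 ≤ τ := by
      rw [zet, Real.sqrt_le_left zero_le_one, one_div, Real.log_inv] at h
      have a := Real.add_one_le_exp (log τ)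
      rw [Real.exp_log hτ] at a
      linarith
    nlinarith

lemma card_zero {N p : ℕ} (θ : Fin N → ℝ) (h : θ ∈ nearlyBlack N p) :
    (N : ℝ) - p ≤ ((Finset.univ.filter fun i => θ i = 0).card : ℝ) := by
  have h1 : (Finset.univ.filter fun i => θ i ≠ 0).card ≤ p := by
    have : ({i | θ i ≠ 0} : Set (Fin N)).ncard ≤ p := h
    rw [Set.ncard_eq_toFinset_card'] at this
    simpa using this
  have h2 := Finset.card_filter_add_card_filter_not (s := (Finset.univ : Finset (Fin N))) (fun i => θ i = 0)
  rw [Finset.card_univ, Fintype.card_fin] at h2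
  have h3 : N ≤ (Finset.univ.filter fun i => θ i = 0).card + p := by
    exact h2.symm.le.trans (Nat.add_le_add_left h1 _)
  have : (N:ℝ) ≤ ((Finset.univ.filter fun i => θ i = 0).card : ℝ) + p := by exact_mod_cast h3
  linarith

theorem stmt_8
    (α : ℝ) (hα : α ∈ Set.Ioo (0 : ℝ) 1)
    (τ : ℕ → ℝ) (hτpos : ∀ n, 0 < τ n)
    (hτζ : Tendsto (fun n : ℕ => ((n : ℝ) + 1) * τ n / zet (τ n)) atTop atTop)
    (p : ℕ → ℕ) (hpo : (fun n => (p n : ℝ)) =o[atTop] fun n => ((n : ℝ) + 1))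
    (θ₀ : (n : ℕ) → Fin (n + 1) → ℝ) (hθ₀ : ∀ n, θ₀ n ∈ nearlyBlack (n + 1) (p n))
    (rball : (n : ℕ) → (Fin (n + 1) → ℝ) → ℝ)
    (hrball : ∀ (n : ℕ) (y : Fin (n + 1) → ℝ),
      fullPostProb (τ n) y
          {θ | l2dist θ (fullPostMean (τ n) y) ≤ rball n y} = 1 - α) :
    Tendsto
      (fun n =>
        Pdata (θ₀ n)
          {y : Fin (n + 1) → ℝ |
            0.5 * Real.sqrt (((n : ℝ) + 1) * τ n * zet (τ n)) ≤ rball n y})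
      atTop (nhds 1) := by
  obtain ⟨C, hC, hkey⟩ := key
  have hα' : 0 < 1 - α := by linarith [hα.2]
  have hprob : ∀ n, IsProbabilityMeasure (Pdata (θ₀ n)) := fun n => by unfold Pdata; infer_instance
  have hzpos : ∀ᶠ n in atTop, 0 < zet (τ n) := by
    filter_upwards [hτζ.eventually_gt_atTop 0] with n hn
    refine lt_of_le_of_ne (Real.sqrt_nonneg _) fun h => ?_
    rw [show zet (τ n) = 0 from h.symm] at hn
    simp at hn
  have hp : ∀ᶠ n in atTop, (p n : ℝ) ≤ 0.001 * ((n:ℝ) + 1) := by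
    filter_upwards [hpo.bound (show (0:ℝ) < 0.001 by norm_num)] with n hn
    rw [Real.norm_of_nonneg (by positivity), Real.norm_of_nonneg (by positivity)] at hn
    exact hn
  set R : ℕ → ℝ := fun n => ((n:ℝ) + 1) * τ n / (1 + zet (τ n)) with hR
  have hRt : Tendsto R atTop atTop := by
    rw [tendsto_atTop]
    intro B
    have hN : Tendsto (fun n : ℕ => (n:ℝ) + 1) atTop atTop :=
      tendsto_atTop_add_const_right _ _ tendsto_natCast_atTop_atTop
    filter_upwards [hzpos, hτζ.eventually_ge_atTop (2 * max B 0), hN.eventually_ge_atTop (4 * max B 0)] with n a b c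
    exact (le_max_left B 0).trans (rate_ge (hτpos n) (by positivity) a (le_max_right _ _) b c)
  set c0 : ℝ := 0.0000000002 / C with hc0
  have hc0p : 0 < c0 := by positivity
  have hbd : ∀ᶠ n in atTop, (Pdata (θ₀ n)).real {y | rball n y < 0.5 * √(((n:ℝ) + 1) * τ n * zet (τ n))} ≤
      exp (-(c0 * R n)) / (1 - α) := by
    filter_upwards [hzpos, hp] with n hz hpn
    have hτ := hτpos n
    have h1 := zet_pos_lt hτ hz
    obtain ⟨T, v, w, hvc, hwc, hv, hw, hμ, hσ⟩ := hkey (τ n) hτ h1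
    set N : ℝ := (n:ℝ) + 1 with hN
    have hNp : 0 < N := by positivity
    set z := zet (τ n) with hzdef
    set t := τ n with htdef
    have hm := card_zero (θ₀ n) (hθ₀ n)
    set m := (Finset.univ.filter fun i => θ₀ n i = 0).card with hmdef
    have hmN : (m:ℝ) ≤ N := by
      have : m ≤ n + 1 := by
        rw [hmdef]; exact (Finset.card_filter_le _ _).trans (by simp)
      rw [hN]; exact_mod_cast this
    push_cast at hm
    have hm2 : 0.999 * N ≤ m := by linarith
    have hsq : (0.5 * √(N * t * z)) ^ 2 = 0.25 * (N * t * z) := by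
      rw [mul_pow, Real.sq_sqrt (by positivity)]; norm_num
    have hgap : 0.00002 * (N * t * (1 + z)) ≤ m * (0.253 * t * (z + 0.01)) - (0.5 * √(N * t * z)) ^ 2 := by
      rw [hsq]
      have a : 0.999 * N * (0.253 * t * (z + 0.01)) ≤ m * (0.253 * t * (z + 0.01)) := by gcongr
      have b : 0 < N * t := by positivity
      have c : 0 < N * t * z := by positivity
      nlinarith
    have hgp : 0 < 0.00002 * (N * t * (1 + z)) := by positivity
    have hfin := partC hτ h1 (θ₀ n) α hα.2 (rball n) (hrball n) T v w hvc hwc hv hw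
      (0.253 * t * (z + 0.01)) (C * t * (1 + z) ^ 3) (0.5 * √(N * t * z)) (by positivity) (by positivity)
      hμ hσ m hmdef (by linarith)
    refine hfin.trans ?_
    gcongr
    have hmp : (0:ℝ) < m := by linarith
    calc c0 * R n = (0.00002 * (N * t * (1 + z))) ^ 2 / (2 * N * (C * t * (1 + z) ^ 3)) := by
          rw [hc0, hR]
          simp only [← hN, ← hzdef, ← htdef]
          field_simp
          norm_num
      _ ≤ _ := by gcongr
  have hlim : Tendsto (fun n => exp (-(c0 * R n)) / (1 - α)) atTop (nhds 0) := by
    have : Tendsto (fun n => exp (-(c0 * R n))) atTop (nhds 0) :=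
      Real.tendsto_exp_neg_atTop_nhds_zero.comp (hRt.const_mul_atTop hc0p)
    simpa using this.div_const (1 - α)
  have hlow : Tendsto (fun n => (1:ℝ≥0∞) - ENNReal.ofReal (exp (-(c0 * R n)) / (1 - α))) atTop (nhds 1) := by
    have := ENNReal.Tendsto.sub (tendsto_const_nhds (x := (1:ℝ≥0∞))) (ENNReal.tendsto_ofReal hlim)
      (Or.inl ENNReal.one_ne_top)
    simpa using this
  refine tendsto_of_tendsto_of_tendsto_of_le_of_le' hlow tendsto_const_nhds ?_
    (Eventually.of_forall fun n => prob_le_one)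
  filter_upwards [hbd] with n hn
  rw [tsub_le_iff_right]
  have hu : (1:ℝ≥0∞) ≤ Pdata (θ₀ n) {y | 0.5 * √(((n:ℝ) + 1) * τ n * zet (τ n)) ≤ rball n y} +
      Pdata (θ₀ n) {y | rball n y < 0.5 * √(((n:ℝ) + 1) * τ n * zet (τ n))} := by
    rw [← measure_univ (μ := Pdata (θ₀ n))]
    refine le_trans (measure_mono ?_) (measure_union_le _ _)
    intro y _
    exact le_or_gt (0.5 * √(((n:ℝ) + 1) * τ n * zet (τ n))) (rball n y)
  refine hu.trans ?_
  gcongr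
  rw [← ENNReal.ofReal_toReal (measure_ne_top (Pdata (θ₀ n)) _)]
  exact ENNReal.ofReal_le_ofReal hn

end
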